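/- arXiv:2002.05119 — 8 statements merged into one kernel-verified Lean document; each statement's English description precedes it below -/
import Mathlib

section
/- For every instance with three agents having additive nonnegative valuations over a finite set M of indivisible goods, there exists a complete EFX allocation: a partition of M into bundles X_1, X_2, X_3 such that for all agents i, j and every good g ∈ X_j, v_i(X_i) ≥ v_i(X_j ∖ {g}). -/
open Finset

/-- Additive value of a bundle `S` under per-good valuation `v`. -/
noncomputable def val {G : Type*} (v : G → ℝ) (S : Finset G) : ℝ := ∑ g ∈ S, v g

/-- `X` is EFX: no agent `i` strongly envies agent `j`, i.e. for every good `g`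
in `X j`, `v_i(X_i) ≥ v_i(X_j \ {g})`. -/
def EFX {G : Type*} [DecidableEq G] (v : Fin 3 → G → ℝ) (X : Fin 3 → Finset G) : Prop :=
  ∀ i j : Fin 3, ∀ g ∈ X j, val (v i) (X j \ {g}) ≤ val (v i) (X i)

/-!
Call a partition admissible if all but one of its bundles are EFX-feasible for the first agent and
the remaining bundle is EFX-feasible for the second or the third agent. Measure it by the smaller of
the values that the first agent gives to its two bundles. If an admissible partition yields no EFX
allocation, then the second and the third agent both want only the remaining bundle, even after the
loss of a suitable good. Handing this good to the poorer of the two other bundles, and repairing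
the outcome by discarding surplus goods or by letting the second agent rebalance two bundles,
produces an EFX allocation or an admissible partition of larger measure. As there are finitely many
partitions, the improvement stops at an EFX allocation.

The argument needs strict inequalities between values of distinct bundles, so ties are broken first.
-/

namespace FairDivision

variable {G ι K : Type*}

section Partition

/-- The bundles `X i` form a partition of `M`, where bundles may be empty. -/
structure IsPartition (M : Finset G) (X : ι → Finset G) : Prop where
  pairwise_disjoint : Pairwise fun i j => Disjoint (X i) (X j)
  mem_iff : ∀ g, g ∈ M ↔ ∃ i, g ∈ X i

variable {M S : Finset G} {X : ι → Finset G} {i j k : ι}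

namespace IsPartition

lemma subset (hX : IsPartition M X) (i : ι) : X i ⊆ M := fun g hg => (hX.mem_iff g).2 ⟨i, hg⟩

lemma comp_equiv (hX : IsPartition M X) (σ : Equiv.Perm ι) : IsPartition M (X ∘ σ) :=
  ⟨fun _ _ h => hX.pairwise_disjoint (σ.injective.ne h),
    fun g => (hX.mem_iff g).trans σ.surjective.exists⟩

lemma setOf_finite [Finite ι] (M : Finset G) : {X : ι → Finset G | IsPartition M X}.Finite := by
  classical
  have := Fintype.ofFinite ι
  exact (Set.finite_Iic fun _ => M).subset fun X hX i => hX.subset i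

lemma apply_ne_apply (hX : IsPartition M X) {f : Finset G → K} (hf : f.Injective)
    (hi : (X i).Nonempty) (hij : i ≠ j) : f (X i) ≠ f (X j) := fun h =>
  hi.ne_empty <| disjoint_self_iff_empty _ |>.1 <| by
    simpa only [← hf h] using hX.pairwise_disjoint hij

end IsPartition

variable [DecidableEq G] [DecidableEq ι]

/-- Hand the goods in `S` over to the owner of bundle `i`. -/
def transfer (X : ι → Finset G) (S : Finset G) (i : ι) : ι → Finset G :=
  fun j => if j = i then X j ∪ S else X j \ S

lemma transfer_self (X : ι → Finset G) (S : Finset G) (i : ι) : transfer X S i i = X i ∪ S :=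
  if_pos rfl

lemma transfer_of_ne (X : ι → Finset G) (S : Finset G) (h : j ≠ i) :
    transfer X S i j = X j \ S :=
  if_neg h

namespace IsPartition

lemma transfer_of_subset (hX : IsPartition M X) (hS : S ⊆ X k) (hi : j ≠ i) (hk : j ≠ k) :
    transfer X S i j = X j := by
  rw [transfer_of_ne X S hi]
  exact sdiff_eq_self_of_disjoint ((hX.pairwise_disjoint hk).mono_right hS)

lemma transfer_union (hX : IsPartition M X) (S : Finset G) (i : ι) :
    IsPartition (M ∪ S) (transfer X S i) := by
  refine ⟨fun j k hjk => ?_, fun g => ⟨fun hg => ?_, ?_⟩⟩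
  · have := hX.pairwise_disjoint hjk
    simp only [Finset.disjoint_left, transfer] at this ⊢
    grind
  · by_cases hgS : g ∈ S
    · exact ⟨i, by simp [transfer_self, hgS]⟩
    · obtain ⟨j, hj⟩ := (hX.mem_iff g).1 ((mem_union.1 hg).resolve_right hgS)
      exact ⟨j, by grind [transfer]⟩
  · rintro ⟨j, hj⟩
    have := hX.subset j
    grind [transfer]

lemma transfer (hX : IsPartition M X) (hS : S ⊆ X k) (i : ι) :
    IsPartition M (transfer X S i) := by
  simpa only [union_eq_left.2 (hS.trans (hX.subset k))] using hX.transfer_union S i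

end IsPartition

omit [DecidableEq G] [DecidableEq ι] in
lemma exists_isPartition_nonempty_or_card_le_one [Nonempty ι] (M : Finset G) :
    ∃ X : ι → Finset G, IsPartition M X ∧ ((∀ i, (X i).Nonempty) ∨ ∀ i, #(X i) ≤ 1) := by
  classical
  induction M using Finset.induction_on with
  | empty => exact ⟨fun _ => ∅, ⟨by simp [Pairwise], by simp⟩, .inr (by simp)⟩
  | insert g M hg ih =>
    obtain ⟨X, hX, h⟩ := ih
    have hXg (i : ι) : X i \ {g} = X i :=
      sdiff_eq_self_of_disjoint (disjoint_singleton_right.2 fun h' => hg (hX.subset i h'))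
    have hY (i : ι) : IsPartition (insert g M) (transfer X {g} i) := by
      simpa only [insert_eq, union_comm] using hX.transfer_union {g} i
    by_cases hne : ∀ i, (X i).Nonempty
    · refine ⟨_, hY (Classical.arbitrary ι), .inl fun j => ?_⟩
      by_cases hj : j = Classical.arbitrary ι <;> simp [transfer, hj, hXg, hne]
    · obtain ⟨i, hi⟩ := not_forall.1 hne
      rw [not_nonempty_iff_eq_empty] at hi
      refine ⟨_, hY i, .inr fun j => ?_⟩
      by_cases hj : j = i
      · simp [hj, transfer_self, hi]
      · simpa only [transfer_of_ne X {g} hj, hXg] using h.resolve_left hne j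

end Partition

section Feasibility

variable [DecidableEq G] {M : Finset G} {X : ι → Finset G} {f : Finset G → K} {i j k : ι}

section Preorder

variable [Preorder K]

/-- An agent with valuation `f` who owns the bundle `X i` strongly envies no bundle of `X`. -/
def EFXFeasible (f : Finset G → K) (X : ι → Finset G) (i : ι) : Prop :=
  ∀ j, ∀ g ∈ X j, f (X j \ {g}) ≤ f (X i)

lemma EFXFeasible.of_le (h : EFXFeasible f X i) (hij : f (X i) ≤ f (X j)) : EFXFeasible f X j :=
  fun l g hg => (h l g hg).trans hij

lemma efxFeasible_of_forall_le (hf : Monotone f) (h : ∀ j, f (X j) ≤ f (X i)) :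
    EFXFeasible f X i :=
  fun j _ _ => (hf sdiff_subset).trans (h j)

lemma efxFeasible_of_card_le_one (hf : Monotone f) (h : ∀ j, #(X j) ≤ 1) (i : ι) :
    EFXFeasible f X i := fun j g hg => by
  have hempty : X j \ {g} = ∅ :=
    sdiff_eq_empty_iff_subset.2 fun x hx => mem_singleton.2 (card_le_one.1 (h j) x hx g hg)
  exact hempty ▸ hf (empty_subset _)

end Preorder

variable [LinearOrder K]

lemma exists_efxFeasible [Finite ι] [Nonempty ι] (hf : Monotone f) (X : ι → Finset G) :
    ∃ i, EFXFeasible f X i :=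
  (Finite.exists_max (f ∘ X)).imp fun _ => efxFeasible_of_forall_le hf

lemma exists_forall_lt_sdiff_of_not_efxFeasible [Finite ι] [Nontrivial ι] (hf : Monotone f)
    (h : ∀ i ≠ k, ¬EFXFeasible f X i) : ∃ g ∈ X k, ∀ i ≠ k, f (X i) < f (X k \ {g}) := by
  obtain ⟨i, hi, hmax⟩ := Set.exists_max_image {i | i ≠ k} (f ∘ X) (Set.toFinite _) (exists_ne k)
  obtain ⟨j, g, hg, hlt⟩ : ∃ j, ∃ g ∈ X j, f (X i) < f (X j \ {g}) := by
    simpa only [EFXFeasible, not_forall, not_le, exists_prop] using h i hi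
  obtain rfl : j = k := by
    by_contra hj
    exact (hmax j hj).not_gt (hlt.trans_le (hf sdiff_subset))
  exact ⟨g, hg, fun l hl => (hmax l hl).trans_lt hlt⟩

lemma exists_subset_minimal_lt {S : Finset G} {t : K} (h : t < f S) :
    ∃ T ⊆ S, t < f T ∧ ∀ g ∈ T, f (T \ {g}) ≤ t := by
  obtain ⟨T, hTS, hT⟩ := exists_minimal_le_of_wellFoundedLT (fun T => t < f T) S h
  exact ⟨T, hTS, hT.prop, fun g hg => not_lt.1 fun hlt =>
    hT.not_prop_of_lt (sdiff_ssubset (singleton_subset_iff.2 hg) (singleton_nonempty g)) hlt⟩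

lemma lt_apply_transfer [DecidableEq ι] (hf : Monotone f) (hinj : f.Injective)
    (hX : IsPartition M X) (hi : (X i).Nonempty) {g : G} (hg : g ∈ X j)
    (hlt : f (X i) < f (X j \ {g})) (hk : f (X i) ≤ f (X k)) :
    f (X i) < f (transfer X {g} i k) := by
  have hji : j ≠ i := by
    rintro rfl
    exact (hf sdiff_subset).not_gt hlt
  have hgi : g ∉ X i := Finset.disjoint_left.1 (hX.pairwise_disjoint hji) hg
  rcases eq_or_ne k i with rfl | hki
  · rw [transfer_self, union_singleton]
    exact hf.strictMono_of_injective hinj (ssubset_insert hgi)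
  rcases eq_or_ne k j with rfl | hkj
  · rwa [transfer_of_ne X _ hki]
  · rw [hX.transfer_of_subset (singleton_subset_iff.2 hg) hki hkj]
    exact hk.lt_of_ne (hX.apply_ne_apply hinj hi hki.symm)

/-- Choosing the redistribution that maximises the smallest value is enough: since the minimum is
attained only once, giving an enviable good to the poorest bundle would increase it. -/
lemma exists_balanced [Finite ι] (hf : Monotone f) (hinj : f.Injective) (hX : IsPartition M X)
    {J : Finset ι} (hJ : J.Nonempty) (hne : ∀ i ∈ J, (X i).Nonempty) :
    ∃ Y : ι → Finset G, IsPartition M Y ∧ (∀ i ∉ J, Y i = X i) ∧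
      (∀ i ∈ J, ∃ j ∈ J, f (X j) ≤ f (Y i)) ∧
      ∀ i ∈ J, ∀ j ∈ J, ∀ g ∈ Y j, f (Y j \ {g}) ≤ f (Y i) := by
  classical
  obtain ⟨Y, ⟨hY, hYX⟩, hmax⟩ := Set.exists_max_image {Y | IsPartition M Y ∧ ∀ i ∉ J, Y i = X i}
    (fun Y => J.inf' hJ (f ∘ Y)) ((IsPartition.setOf_finite M).subset fun _ h => h.1)
    ⟨X, hX, fun _ _ => rfl⟩
  obtain ⟨m, hm, hmin⟩ := J.exists_min_image (f ∘ Y) hJ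
  have hXY : ∃ j ∈ J, f (X j) ≤ f (Y m) := by
    obtain ⟨j, hj, hj'⟩ := exists_mem_eq_inf' hJ (f ∘ X)
    exact ⟨j, hj, hj'.ge.trans ((hmax X ⟨hX, fun _ _ => rfl⟩).trans (inf'_le _ hm))⟩
  have hYm : (Y m).Nonempty := by
    obtain ⟨j, hj, hle⟩ := hXY
    rw [nonempty_iff_ne_empty]
    exact fun h => (hf.strictMono_of_injective hinj (empty_ssubset.2 (hne j hj))).not_ge (h ▸ hle)
  have hpoorest : ∀ j ∈ J, ∀ g ∈ Y j, f (Y j \ {g}) ≤ f (Y m) := by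
    intro j hj g hg
    by_contra! hlt
    have himproved : J.inf' hJ (f ∘ Y) < J.inf' hJ (f ∘ transfer Y {g} m) :=
      (inf'_le _ hm).trans_lt <| (lt_inf'_iff hJ).2 fun l hl =>
        lt_apply_transfer hf hinj hY hYm hg hlt (hmin l hl)
    refine (hmax _ ⟨hY.transfer (singleton_subset_iff.2 hg) m, fun i hi => ?_⟩).not_gt himproved
    rw [hY.transfer_of_subset (singleton_subset_iff.2 hg) (ne_of_mem_of_not_mem hm hi).symm
      (ne_of_mem_of_not_mem hj hi).symm, hYX i hi]
  exact ⟨Y, hY, hYX, fun i hi => hXY.imp fun j hj => ⟨hj.1, hj.2.trans (hmin i hi)⟩,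
    fun i hi j hj g hg => (hpoorest j hj g hg).trans (hmin i hi)⟩

end Feasibility

section ThreeAgents

variable [DecidableEq G] {K₁ K₂ K₃ : Type*} [LinearOrder K₁] [LinearOrder K₂] [LinearOrder K₃]
  {M : Finset G} {f : Finset G → K₁} {p : Finset G → K₂} {q : Finset G → K₃} {t : K₁}
  {X : Fin 3 → Finset G} {i j k : Fin 3}

/-- Any two ways of splitting a subset of `M` into two bundles are comparable: the worse bundle of
one is worth at most the better bundle of the other. Additive valuations have this property. -/
def MMSFeasible (M : Finset G) (q : Finset G → K₃) : Prop :=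
  ∀ ⦃A B C D : Finset G⦄, Disjoint A B → Disjoint C D → A ∪ B = C ∪ D → A ∪ B ⊆ M →
    min (q A) (q B) ≤ max (q C) (q D)

/-- Some allocation of `M` to agents with valuations `f`, `p`, `q` is EFX. The valuations may take
values in different orders, since ties are broken for some agents only. -/
def HasEFX (f : Finset G → K₁) (p : Finset G → K₂) (q : Finset G → K₃) (M : Finset G) : Prop :=
  ∃ X : Fin 3 → Finset G, IsPartition M X ∧
    EFXFeasible f X 0 ∧ EFXFeasible p X 1 ∧ EFXFeasible q X 2

/-- Every bundle except `X k` is EFX-feasible for the agent with valuation `f`, and `X k` is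
EFX-feasible for one of the other two agents. -/
structure Admissible (f : Finset G → K₁) (p : Finset G → K₂) (q : Finset G → K₃) (M : Finset G)
    (X : Fin 3 → Finset G) (k : Fin 3) : Prop where
  isPartition : IsPartition M X
  feasible_of_ne : ∀ i ≠ k, EFXFeasible f X i
  feasible_or : EFXFeasible p X k ∨ EFXFeasible q X k

/-- Some admissible partition gives the agent with valuation `f` two bundles worth more than `t`. -/
def HasAdmissibleAbove (f : Finset G → K₁) (p : Finset G → K₂) (q : Finset G → K₃) (M : Finset G)
    (t : K₁) : Prop :=
  ∃ X k, Admissible f p q M X k ∧ ∀ i ≠ k, t < f (X i)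

lemma forall_iff_of_distinct {P : Fin 3 → Prop} (hij : i ≠ j) (hik : i ≠ k) (hjk : j ≠ k) :
    (∀ l, P l) ↔ P i ∧ P j ∧ P k := by
  refine ⟨fun h => ⟨h i, h j, h k⟩, fun ⟨hi, hj, hk⟩ l => ?_⟩
  obtain rfl | rfl | rfl : l = i ∨ l = j ∨ l = k := by omega
  exacts [hi, hj, hk]

lemma forall_ne_iff_of_distinct {P : Fin 3 → Prop} (hij : i ≠ j) (hik : i ≠ k) (hjk : j ≠ k) :
    (∀ l ≠ k, P l) ↔ P i ∧ P j := by
  simp [forall_iff_of_distinct hij hik hjk, hik, hjk]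

lemma exists_perm_of_distinct (hij : i ≠ j) (hik : i ≠ k) (hjk : j ≠ k) :
    ∃ σ : Equiv.Perm (Fin 3), σ 0 = i ∧ σ 1 = j ∧ σ 2 = k := by
  decide +revert

lemma IsPartition.union_eq_sdiff (hX : IsPartition M X) (hij : i ≠ j) (hik : i ≠ k)
    (hjk : j ≠ k) : X i ∪ X k = M \ X j := by
  ext g
  have hi : g ∈ X i → g ∉ X j := fun h => Finset.disjoint_left.1 (hX.pairwise_disjoint hij) h
  have hk : g ∈ X k → g ∉ X j := fun h => Finset.disjoint_right.1 (hX.pairwise_disjoint hjk) h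
  have hM : g ∉ M ↔ g ∉ X i ∧ g ∉ X j ∧ g ∉ X k := by
    rw [hX.mem_iff, not_exists, forall_iff_of_distinct hij hik hjk]
  grind

lemma IsPartition.union_eq (hX : IsPartition M X) : X 0 ∪ X 1 ∪ X 2 = M := by
  ext g
  simp [hX.mem_iff, Fin.exists_fin_succ]

lemma HasEFX.of_distinct (hX : IsPartition M X) (hij : i ≠ j) (hik : i ≠ k) (hjk : j ≠ k)
    (hi : EFXFeasible f X i) (hj : EFXFeasible p X j) (hk : EFXFeasible q X k) :
    HasEFX f p q M := by
  obtain ⟨σ, rfl, rfl, rfl⟩ := exists_perm_of_distinct hij hik hjk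
  exact ⟨X ∘ σ, hX.comp_equiv σ, fun l => hi (σ l), fun l => hj (σ l), fun l => hk (σ l)⟩

lemma HasEFX.swap (h : HasEFX f p q M) : HasEFX f q p M :=
  have ⟨_, hX, h₀, h₁, h₂⟩ := h
  .of_distinct (i := 0) (j := 2) (k := 1) hX (by decide) (by decide) (by decide) h₀ h₂ h₁

lemma Admissible.swap (h : Admissible f p q M X k) : Admissible f q p M X k :=
  ⟨h.isPartition, h.feasible_of_ne, h.feasible_or.symm⟩

lemma HasAdmissibleAbove.swap (h : HasAdmissibleAbove f p q M t) : HasAdmissibleAbove f q p M t :=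
  have ⟨X, k, hA, ht⟩ := h
  ⟨X, k, hA.swap, ht⟩

lemma HasAdmissibleAbove.of_forall_lt (hf : Monotone f) (hinj : f.Injective) (hp : Monotone p)
    (hX : IsPartition M X) (ht : f ∅ ≤ t) (hlt : ∀ i, t < f (X i)) :
    HasAdmissibleAbove f p q M t := by
  have hne (i : Fin 3) : (X i).Nonempty :=
    nonempty_iff_ne_empty.2 fun h => (hlt i).not_ge (h ▸ ht)
  obtain ⟨Y, hY, -, hXY, hfeas⟩ := exists_balanced hf hinj hX univ_nonempty fun i _ => hne i
  obtain ⟨k, hk⟩ := exists_efxFeasible hp Y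
  refine ⟨Y, k, ⟨hY, fun i _ j => hfeas i (mem_univ i) j (mem_univ j), .inl hk⟩, fun i _ => ?_⟩
  obtain ⟨j, -, hj⟩ := hXY i (mem_univ i)
  exact (hlt j).trans_le hj

/-- Shrinking `X i` to a minimal set still worth more than `X j`, and giving the surplus to `X k`,
makes `X i` and `X j` feasible unless `X k` becomes valuable enough to rebalance all bundles. -/
lemma HasAdmissibleAbove.of_lt (hf : Monotone f) (hinj : f.Injective) (hp : Monotone p)
    (hX : IsPartition M X) (hij : i ≠ j) (hik : i ≠ k) (hjk : j ≠ k) (ht : f ∅ ≤ t)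
    (htj : t < f (X j)) (hji : f (X j) < f (X i)) (hpj : p (X j) ≤ p (X k))
    (hpi : ∀ S ⊆ X i, (∀ g ∈ S, f (S \ {g}) ≤ f (X j)) → p S ≤ p (X k)) :
    HasAdmissibleAbove f p q M t := by
  obtain ⟨S, hSX, hjS, hSj⟩ := exists_subset_minimal_lt hji
  let Y := transfer X (X i \ S) k
  have hY : IsPartition M Y := hX.transfer sdiff_subset k
  have hYi : Y i = S := (transfer_of_ne _ _ hik).trans (Finset.sdiff_sdiff_eq_self hSX)
  have hYj : Y j = X j := hX.transfer_of_subset sdiff_subset hjk hij.symm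
  have hYk : p (X k) ≤ p (Y k) := hp (subset_union_left.trans (transfer_self _ _ _).ge)
  have htS : t < f S := htj.trans hjS
  rcases lt_or_ge t (f (Y k)) with htk | hkt
  · refine .of_forall_lt hf hinj hp hY ht ((forall_iff_of_distinct hij hik hjk).2 ?_)
    exact ⟨hYi ▸ htS, hYj ▸ htj, htk⟩
  have hfj : EFXFeasible f Y j := by
    refine (forall_iff_of_distinct hij hik hjk).2 ⟨?_, ?_, fun g _ => ?_⟩
    · rwa [hYi, hYj]
    · exact fun g _ => hf sdiff_subset
    · exact (hf sdiff_subset).trans (hkt.trans (hYj ▸ htj.le))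
  have hpk : EFXFeasible p Y k := by
    refine efxFeasible_of_forall_le hp ((forall_iff_of_distinct hij hik hjk).2 ⟨?_, ?_, le_rfl⟩)
    · exact hYi ▸ (hpi S hSX hSj).trans hYk
    · exact hYj ▸ hpj.trans hYk
  refine ⟨Y, k, ⟨hY, (forall_ne_iff_of_distinct hij hik hjk).2 ⟨hfj.of_le ?_, hfj⟩, .inl hpk⟩,
    (forall_ne_iff_of_distinct hij hik hjk).2 ⟨hYi ▸ htS, hYj ▸ htj⟩⟩
  rw [hYi, hYj]
  exact hjS.le

lemma Admissible.hasAdmissibleAbove_of_transfer (hf : Monotone f) (hinj : f.Injective)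
    (hp : Monotone p) (h : Admissible f p q M X k) (hij : i ≠ j) (hik : i ≠ k) (hjk : j ≠ k)
    (hlt : f (X i) < f (X j)) {g : G} (hg : g ∈ X k) (hpj : p (X j) ≤ p (X k \ {g}))
    (hpi : p (X i ∪ {g}) ≤ p (X k \ {g})) : HasAdmissibleAbove f p q M (f (X i)) := by
  have hX := h.isPartition
  have hgX : {g} ⊆ X k := singleton_subset_iff.2 hg
  let Y := transfer X {g} i
  have hY : IsPartition M Y := hX.transfer hgX i
  have hYi : Y i = X i ∪ {g} := transfer_self X {g} i
  have hYj : Y j = X j := hX.transfer_of_subset hgX hij.symm hjk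
  have hYk : Y k = X k \ {g} := transfer_of_ne X {g} hik.symm
  rw [← hYi, ← hYk] at hpi
  rw [← hYj, ← hYk] at hpj
  rcases lt_or_ge (f (Y j)) (f (Y i)) with hji | hle
  · exact .of_lt hf hinj hp hY hij hik hjk (hf (empty_subset _)) (hYj ▸ hlt) hji hpj
      fun S hS _ => (hp hS).trans hpi
  have hXi : f (X i) < f (Y i) := by
    rw [hYi, union_singleton]
    exact hf.strictMono_of_injective hinj
      (ssubset_insert (Finset.disjoint_left.1 (hX.pairwise_disjoint hik.symm) hg))
  have hfi : EFXFeasible f Y i := by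
    refine (forall_iff_of_distinct hij hik hjk).2 ⟨fun _ _ => hf sdiff_subset, fun x hx => ?_,
      fun x hx => ?_⟩
    · rw [hYj] at hx ⊢
      exact (h.feasible_of_ne i hik j x hx).trans hXi.le
    · rw [hYk] at hx ⊢
      exact (hf (sdiff_subset_sdiff sdiff_subset Subset.rfl)).trans
        ((h.feasible_of_ne i hik k x (mem_sdiff.1 hx).1).trans hXi.le)
  have hpk : EFXFeasible p Y k :=
    efxFeasible_of_forall_le hp ((forall_iff_of_distinct hij hik hjk).2 ⟨hpi, hpj, le_rfl⟩)
  exact ⟨Y, k, ⟨hY, (forall_ne_iff_of_distinct hij hik hjk).2 ⟨hfi, hfi.of_le hle⟩, .inl hpk⟩,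
    (forall_ne_iff_of_distinct hij hik hjk).2 ⟨hXi, hYj ▸ hlt⟩⟩

lemma hasEFX_or_hasAdmissibleAbove (hf : Monotone f) (hinj : f.Injective) (hp : Monotone p)
    (hq : Monotone q) (hX : IsPartition M X) (hij : i ≠ j) (hik : i ≠ k) (hjk : j ≠ k)
    (ht : f ∅ ≤ t) (htj : t < f (X j)) (hpk : EFXFeasible p X k) (hpj : p (X j) ≤ p (X k))
    (hqi : ∀ l, q (X l) ≤ q (X i)) : HasEFX f p q M ∨ HasAdmissibleAbove f p q M t := by
  by_cases hji : ∀ g ∈ X i, f (X i \ {g}) ≤ f (X j)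
  · by_cases hjk' : ∀ g ∈ X k, f (X k \ {g}) ≤ f (X j)
    · have hfj : EFXFeasible f X j :=
        (forall_iff_of_distinct hij hik hjk).2 ⟨hji, fun _ _ => hf sdiff_subset, hjk'⟩
      exact .inl (.of_distinct hX hjk hij.symm hik.symm hfj hpk (efxFeasible_of_forall_le hq hqi))
    · have hlt : f (X j) < f (X k) :=
        lt_of_not_ge fun h => hjk' fun _ _ => (hf sdiff_subset).trans h
      exact .inr (HasAdmissibleAbove.of_lt hf hinj hq hX hjk.symm hik.symm hij.symm ht htj hlt
        (hqi j) fun S hS _ => (hq hS).trans (hqi k)).swap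
  · have hlt : f (X j) < f (X i) :=
      lt_of_not_ge fun h => hji fun _ _ => (hf sdiff_subset).trans h
    refine .inr (.of_lt hf hinj hp hX hij hik hjk ht htj hlt hpj fun S hS hSj => ?_)
    obtain ⟨g, hg, hgS⟩ := exists_of_ssubset (hS.ssubset_of_ne (by rintro rfl; exact hji hSj))
    exact (hp (subset_sdiff.2 ⟨hS, disjoint_singleton_right.2 hgS⟩)).trans (hpk i g hg)

lemma Admissible.not_efxFeasible_right (h : Admissible f p q M X k) (hE : ¬HasEFX f p q M)
    (hk : EFXFeasible p X k) (hik : i ≠ k) : ¬EFXFeasible q X i := fun hi => by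
  obtain ⟨j, hji, hjk⟩ : ∃ j, j ≠ i ∧ j ≠ k :=
    Fin.exists_ne_and_ne_of_two_lt i k (by decide)
  exact hE (.of_distinct h.isPartition hjk hji hik.symm (h.feasible_of_ne j hjk) hk hi)

lemma Admissible.not_efxFeasible (hp : Monotone p) (hq : Monotone q)
    (h : Admissible f p q M X k) (hE : ¬HasEFX f p q M) :
    (∀ i ≠ k, ¬EFXFeasible p X i) ∧ ∀ i ≠ k, ¬EFXFeasible q X i := by
  have hE' : ¬HasEFX f q p M := fun h' => hE h'.swap
  rcases h.feasible_or with hpk | hqk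
  · have hqX : ∀ i ≠ k, ¬EFXFeasible q X i := fun i => h.not_efxFeasible_right hE hpk
    obtain ⟨l, hl⟩ := exists_efxFeasible hq X
    obtain rfl : l = k := not_imp_comm.1 (hqX l) (not_not.2 hl)
    exact ⟨fun i => h.swap.not_efxFeasible_right hE' hl, hqX⟩
  · have hpX : ∀ i ≠ k, ¬EFXFeasible p X i := fun i => h.swap.not_efxFeasible_right hE' hqk
    obtain ⟨l, hl⟩ := exists_efxFeasible hp X
    obtain rfl : l = k := not_imp_comm.1 (hpX l) (not_not.2 hl)
    exact ⟨hpX, fun i => h.not_efxFeasible_right hE hl⟩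

lemma hasEFX_or_hasAdmissibleAbove_of_rebalance (hf : Monotone f) (hfinj : f.Injective)
    (hp : Monotone p) (hpinj : p.Injective) (hq : Monotone q) (hmms : MMSFeasible M q)
    (hX : IsPartition M X) {Z : Fin 3 → Finset G} (hZ : IsPartition M Z)
    (hij : i ≠ j) (hik : i ≠ k) (hjk : j ≠ k) (hZj : Z j = X j) (ht : f ∅ ≤ t)
    (htj : t < f (X j)) (hpi : p (X j) < p (X i)) (hpk : p (X j) < p (X k))
    (hqi : q (X j) < q (Z i)) (hqk : q (X j) < q (Z k)) :
    HasEFX f p q M ∨ HasAdmissibleAbove f p q M t := by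
  have hp_nonempty {S : Finset G} (hS : p (X j) < p S) : S.Nonempty :=
    nonempty_iff_ne_empty.2 fun h => hS.not_ge (hp (h ▸ empty_subset _))
  obtain ⟨Y, hY, hYX, hXY, hbal⟩ := exists_balanced hp hpinj hX (J := {i, k}) (by simp)
    (by simp [hp_nonempty hpi, hp_nonempty hpk])
  have hYj : Y j = X j := hYX j (by simp [hij.symm, hjk])
  simp only [mem_insert, mem_singleton, forall_eq_or_imp, forall_eq, exists_eq_or_imp,
    exists_eq_left] at hXY hbal
  have hpYi : p (Y j) ≤ p (Y i) :=
    hYj ▸ hXY.1.elim hpi.le.trans hpk.le.trans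
  have hpYk : p (Y j) ≤ p (Y k) :=
    hYj ▸ hXY.2.elim hpi.le.trans hpk.le.trans
  have hfeas_i : EFXFeasible p Y i := (forall_iff_of_distinct hij hik hjk).2
    ⟨hbal.1.1, fun _ _ => (hp sdiff_subset).trans hpYi, hbal.1.2⟩
  have hfeas_k : EFXFeasible p Y k := (forall_iff_of_distinct hij hik hjk).2
    ⟨hbal.2.1, fun _ _ => (hp sdiff_subset).trans hpYk, hbal.2.2⟩
  have hq_max : q (Y j) < max (q (Y i)) (q (Y k)) := by
    have hu : Z i ∪ Z k = Y i ∪ Y k := by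
      rw [hZ.union_eq_sdiff hij hik hjk, hY.union_eq_sdiff hij hik hjk, hZj, hYj]
    rw [hYj]
    exact (lt_min hqi hqk).trans_le (hmms (hZ.pairwise_disjoint hik) (hY.pairwise_disjoint hik) hu
      (union_subset (hZ.subset i) (hZ.subset k)))
  have htY : t < f (Y j) := hYj ▸ htj
  rcases le_total (q (Y k)) (q (Y i)) with hqki | hqik
  · rw [max_eq_left hqki] at hq_max
    exact hasEFX_or_hasAdmissibleAbove hf hfinj hp hq hY hij hik hjk ht htY hfeas_k hpYk
      ((forall_iff_of_distinct hij hik hjk).2 ⟨le_rfl, hq_max.le, hqki⟩)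
  · rw [max_eq_right hqik] at hq_max
    exact hasEFX_or_hasAdmissibleAbove hf hfinj hp hq hY hjk.symm hik.symm hij.symm ht htY hfeas_i
      hpYi ((forall_iff_of_distinct hij hik hjk).2 ⟨hqik, hq_max.le, le_rfl⟩)

lemma Admissible.hasEFX_or_hasAdmissibleAbove (hf : Monotone f) (hfinj : f.Injective)
    (hp : Monotone p) (hpinj : p.Injective) (hq : Monotone q) (hmms : MMSFeasible M q)
    (h : Admissible f p q M X k) (hij : i ≠ j) (hik : i ≠ k) (hjk : j ≠ k)
    (hle : f (X i) ≤ f (X j)) : HasEFX f p q M ∨ HasAdmissibleAbove f p q M (f (X i)) := by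
  by_cases hE : HasEFX f p q M
  · exact .inl hE
  have hX := h.isPartition
  obtain ⟨hpX, hqX⟩ := h.not_efxFeasible hp hq hE
  obtain ⟨g, hg, hgX⟩ := exists_forall_lt_sdiff_of_not_efxFeasible hp hpX
  obtain ⟨x, hx, hxX⟩ := exists_forall_lt_sdiff_of_not_efxFeasible hq hqX
  have hXi : (X i).Nonempty := by
    rw [nonempty_iff_ne_empty]
    intro hempty
    have hne : X k \ {g} ≠ ∅ := fun h' => (hgX i hik).ne (by rw [h', hempty])
    exact (hf.strictMono_of_injective hfinj (empty_ssubset.2 (nonempty_iff_ne_empty.2 hne))).not_ge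
      (hempty ▸ h.feasible_of_ne i hik k g hg)
  have hlt : f (X i) < f (X j) := hle.lt_of_ne (hX.apply_ne_apply hfinj hXi hij)
  by_cases hpi : p (X i ∪ {g}) ≤ p (X k \ {g})
  · exact .inr (h.hasAdmissibleAbove_of_transfer hf hfinj hp hij hik hjk hlt hg (hgX j hjk).le hpi)
  by_cases hqi : q (X i ∪ {x}) ≤ q (X k \ {x})
  · exact .inr (h.swap.hasAdmissibleAbove_of_transfer hf hfinj hq hij hik hjk hlt hx
      (hxX j hjk).le hqi).swap
  have hsub {y : G} (hy : y ∈ X k) : {y} ⊆ X k := singleton_subset_iff.2 hy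
  have hj {y : G} (hy : y ∈ X k) : transfer X {y} i j = X j :=
    hX.transfer_of_subset (hsub hy) hij.symm hjk
  refine hasEFX_or_hasAdmissibleAbove_of_rebalance hf hfinj hp hpinj hq hmms
    (hX.transfer (hsub hg) i) (hX.transfer (hsub hx) i) hij hik hjk ?_ (hf (empty_subset _))
    ?_ ?_ ?_ ?_ ?_
  all_goals simp only [hj hg, hj hx, transfer_self, transfer_of_ne _ _ hik.symm]
  · exact hlt
  · exact (hgX j hjk).trans (not_le.1 hpi)
  · exact hgX j hjk
  · exact (hxX j hjk).trans (not_le.1 hqi)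
  · exact hxX j hjk

lemma HasAdmissibleAbove.hasEFX (hf : Monotone f) (hfinj : f.Injective) (hp : Monotone p)
    (hpinj : p.Injective) (hq : Monotone q) (hmms : MMSFeasible M q)
    (h : HasAdmissibleAbove f p q M t) : HasEFX f p q M := by
  induction hn : #{S ∈ M.powerset | t < f S} using Nat.strong_induction_on generalizing t with
  | _ n ih
  obtain ⟨X, k, hA, ht⟩ := h
  obtain ⟨i, j, hij, hik, hjk, hle⟩ :
      ∃ i j, i ≠ j ∧ i ≠ k ∧ j ≠ k ∧ f (X i) ≤ f (X j) := by
    obtain ⟨i, hik⟩ := exists_ne k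
    obtain ⟨j, hji, hjk⟩ := Fin.exists_ne_and_ne_of_two_lt i k (by decide)
    exact (le_total (f (X i)) (f (X j))).elim (⟨i, j, hji.symm, hik, hjk, ·⟩)
      (⟨j, i, hji, hjk, hik, ·⟩)
  refine (hA.hasEFX_or_hasAdmissibleAbove hf hfinj hp hpinj hq hmms hij hik hjk hle).elim id
    fun h' => ih _ ?_ h' rfl
  subst hn
  refine card_lt_card (ssubset_iff_of_subset ?_ |>.2 ⟨X i, ?_, ?_⟩)
  · exact monotone_filter_right _ fun S _ hS => (ht i hik).trans hS
  · exact mem_filter.2 ⟨mem_powerset.2 (hA.isPartition.subset i), ht i hik⟩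
  · simp

theorem hasEFX_of_injective (hf : Monotone f) (hfinj : f.Injective) (hp : Monotone p)
    (hpinj : p.Injective) (hq : Monotone q) (hmms : MMSFeasible M q) : HasEFX f p q M := by
  obtain ⟨X, hX, hne | hcard⟩ :=
    exists_isPartition_nonempty_or_card_le_one (ι := Fin 3) M
  · have hpos (i : Fin 3) : f ∅ < f (X i) :=
      hf.strictMono_of_injective hfinj (empty_ssubset.2 (hne i))
    exact (HasAdmissibleAbove.of_forall_lt (q := q) hf hfinj hp hX le_rfl hpos).hasEFX hf hfinj hp
      hpinj hq hmms
  · exact ⟨X, hX, efxFeasible_of_card_le_one hf hcard 0, efxFeasible_of_card_le_one hp hcard 1,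
      efxFeasible_of_card_le_one hq hcard 2⟩

end ThreeAgents

section TieBreaking

variable [LinearOrder G] [LinearOrder K] {f : Finset G → K}

/-- The refinement of a valuation that decides ties by the colexicographic order of bundles. -/
def tieBreak (f : Finset G → K) (S : Finset G) : K ×ₗ Colex (Finset G) :=
  toLex (f S, toColex S)

lemma tieBreak_mono (hf : Monotone f) : Monotone (tieBreak f) :=
  fun _ _ h => Prod.Lex.toLex_mono ⟨hf h, Colex.toColex_mono h⟩

omit [LinearOrder G] [LinearOrder K] in
lemma tieBreak_injective (f : Finset G → K) : (tieBreak f).Injective :=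
  fun _ _ h => toColex.injective (Prod.ext_iff.1 (toLex.injective h)).2

lemma EFXFeasible.of_tieBreak [DecidableEq G] {X : ι → Finset G} {i : ι}
    (h : EFXFeasible (tieBreak f) X i) : EFXFeasible f X i :=
  fun j g hg => Prod.Lex.monotone_fst _ _ (h j g hg)

end TieBreaking

section General

variable [DecidableEq G] {M : Finset G} {f : Finset G → K}

lemma monotone_apply_inter [Preorder K] (hf : MonotoneOn f (Set.Iic M)) :
    Monotone fun S => f (S ∩ M) :=
  fun _ _ h => hf inter_subset_right inter_subset_right (inter_subset_inter_right h)

lemma EFXFeasible.of_inter [Preorder K] {X : ι → Finset G} {i : ι} (hX : IsPartition M X)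
    (h : EFXFeasible (fun S => f (S ∩ M)) X i) : EFXFeasible f X i := fun j g hg => by
  simpa only [inter_eq_left.2 (hX.subset i), inter_eq_left.2 (sdiff_subset.trans (hX.subset j))]
    using h j g hg

lemma MMSFeasible.inter [LinearOrder K] (h : MMSFeasible M f) :
    MMSFeasible M fun S => f (S ∩ M) := by
  intro A B C D hAB hCD heq hM
  have hM' := heq ▸ hM
  simpa only [inter_eq_left.2 (union_subset_iff.1 hM).1, inter_eq_left.2 (union_subset_iff.1 hM).2,
    inter_eq_left.2 (union_subset_iff.1 hM').1, inter_eq_left.2 (union_subset_iff.1 hM').2]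
    using h hAB hCD heq hM

end General

section Additive

variable {M : Finset G} {v : G → ℝ}

lemma monotoneOn_val (hv : ∀ g ∈ M, 0 ≤ v g) : MonotoneOn (val v) (Set.Iic M) :=
  fun _ _ _ hT h => sum_le_sum_of_subset_of_nonneg h fun g hg _ => hv g (hT hg)

lemma mmsFeasible_val [DecidableEq G] (M : Finset G) (v : G → ℝ) : MMSFeasible M (val v) := by
  intro A B C D hAB hCD h _
  have hsum : val v A + val v B = val v C + val v D := by
    simp only [_root_.val, ← sum_union hAB, ← sum_union hCD, h]
  by_contra! hlt
  obtain ⟨⟨hCA, -⟩, -, hDB⟩ := by simpa only [max_lt_iff, lt_min_iff] using hlt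
  exact (add_lt_add hCA hDB).ne' hsum

end Additive

end FairDivision

open FairDivision

theorem efx_exists_three_agents_general {G : Type*} [DecidableEq G] {K : Fin 3 → Type*}
    [∀ i, LinearOrder (K i)] (M : Finset G) (f : ∀ i, Finset G → K i)
    (hf : ∀ i, MonotoneOn (f i) (Set.Iic M)) (hmms : MMSFeasible M (f 2)) :
    ∃ X : Fin 3 → Finset G, IsPartition M X ∧ ∀ i, EFXFeasible (f i) X i := by
  let _ : LinearOrder G := IsWellOrder.linearOrder WellOrderingRel
  have hmono (i : Fin 3) := monotone_apply_inter (hf i)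
  obtain ⟨X, hX, h₀, h₁, h₂⟩ := hasEFX_of_injective (tieBreak_mono (hmono 0))
    (tieBreak_injective _) (tieBreak_mono (hmono 1)) (tieBreak_injective _) (hmono 2) hmms.inter
  refine ⟨X, hX, fun i => .of_inter hX ?_⟩
  fin_cases i
  exacts [h₀.of_tieBreak, h₁.of_tieBreak, h₂]

/-- EFX allocations always exist for three agents with additive (nonnegative) valuations:
there is a partition of `M` into three pairwise-disjoint bundles covering `M` that is EFX. -/
theorem efx_exists_three_agents {G : Type*} [DecidableEq G] (M : Finset G)
    (v : Fin 3 → G → ℝ) (hv : ∀ i : Fin 3, ∀ g ∈ M, 0 ≤ v i g) :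
    ∃ X : Fin 3 → Finset G,
      (∀ i, X i ⊆ M) ∧
      (∀ i j, i ≠ j → Disjoint (X i) (X j)) ∧
      X 0 ∪ X 1 ∪ X 2 = M ∧
      EFX v X := by
  obtain ⟨X, hX, hfeas⟩ := efx_exists_three_agents_general M (fun i => val (v i))
    (fun i => monotoneOn_val (hv i)) (mmsFeasible_val M (v 2))
  exact ⟨X, hX.subset, fun _ _ h => hX.pairwise_disjoint h, hX.union_eq, hfeas⟩
end

section
/- Suppose ε > 0 satisfies ε·2^{m+1} < |v_i(S) − v_i(T)| for every agent i and all S, T ⊆ M with v_i(S) ≠ v_i(T). Then the perturbed instance is non-degenerate: for every agent i and all subsets S, T ⊆ M with S ≠ T, v'_i(S) ≠ v'_i(T). -/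
open Finset

/-!
The perturbation adds `ε * c S` to the value of a bundle `S`, where the binary digits of the natural
number `c S` are the indicator of `S`. Hence bundles of equal original value are told apart by `c`,
and since `c S < 2 ^ (m + 1)`, the perturbation cannot close a gap between different original
values.
-/

/-- The natural number whose binary digit at position `e g` is `1` exactly when `g ∈ S`; it
measures the perturbation of the value of `S` in units of `ε`. -/
def binaryCode {G : Type*} (e : G ↪ ℕ) (S : Finset G) : ℕ := ∑ g ∈ S, 2 ^ e g

section BinaryCode

variable {G : Type*} (e : G ↪ ℕ)

lemma binaryCode_eq_sum_map (S : Finset G) : binaryCode e S = ∑ k ∈ S.map e, 2 ^ k :=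
  (sum_map S e _).symm

lemma binaryCode_injective : Function.Injective (binaryCode e) := by
  intro S T h
  rw [binaryCode_eq_sum_map, binaryCode_eq_sum_map] at h
  exact map_injective e (geomSum_injective le_rfl h)

variable {e} in
lemma binaryCode_lt_two_pow {n : ℕ} {S : Finset G} (he : ∀ g ∈ S, e g < n) :
    binaryCode e S < 2 ^ n := by
  rw [binaryCode_eq_sum_map]
  exact Nat.geomSum_lt le_rfl (forall_mem_map.2 he)

lemma val_add_mul_two_pow (v : G → ℝ) (ε : ℝ) (S : Finset G) :
    val (fun g => v g + ε * 2 ^ e g) S = val v S + ε * binaryCode e S := by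
  simp only [_root_.val, binaryCode, sum_add_distrib, mul_sum, Nat.cast_sum, Nat.cast_pow,
    Nat.cast_ofNat]

end BinaryCode

lemma injective_add_of_abs_sub_lt_abs_sub {α β : Type*} [AddCommGroup β] [Lattice β]
    {f p : α → β} (hp : Function.Injective p)
    (hgap : ∀ x y, f x ≠ f y → |p x - p y| < |f x - f y|) :
    Function.Injective (fun x => f x + p x) := by
  intro x y (hxy : f x + p x = f y + p y)
  by_cases hf : f x = f y
  · rw [hf] at hxy
    exact hp (add_left_cancel hxy)
  · have hdiff : f x - f y = p y - p x := by
      rw [sub_eq_sub_iff_add_eq_add, hxy, add_comm]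
    have hlt := hgap x y hf
    rw [hdiff, abs_sub_comm] at hlt
    exact hlt.false.elim

theorem perturbed_instance_nondegenerate_general {G : Type*} (e : G ↪ ℕ) {n : ℕ}
    (he : ∀ g, e g < n) (v : G → ℝ) {ε : ℝ} (hε : 0 < ε)
    (hsep : ∀ S T : Finset G, val v S ≠ val v T → ε * 2 ^ n ≤ |val v S - val v T|) :
    Function.Injective (val fun g => v g + ε * 2 ^ e g) := by
  have hcode (S : Finset G) : (binaryCode e S : ℝ) < 2 ^ n :=
    mod_cast binaryCode_lt_two_pow fun g _ => he g
  have hperturb (S T : Finset G) : |ε * binaryCode e S - ε * binaryCode e T| < ε * 2 ^ n := by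
    rw [← mul_sub, abs_mul, abs_of_pos hε]
    gcongr
    exact abs_sub_lt_of_nonneg_of_lt (Nat.cast_nonneg _) (hcode S) (Nat.cast_nonneg _) (hcode T)
  have hinj : Function.Injective fun S => ε * (binaryCode e S : ℝ) :=
    (mul_right_injective₀ hε.ne').comp (Nat.cast_injective.comp (binaryCode_injective e))
  rw [funext (val_add_mul_two_pow e v ε)]
  exact injective_add_of_abs_sub_lt_abs_sub hinj
    fun S T hval => (hperturb S T).trans_le (hsep S T hval)

/-- If `ε·2^(m+1)` is smaller than every nonzero value gap, the perturbed instance with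
`v'_i(g_j) = v_i(g_j) + ε·2^j` is non-degenerate: distinct bundles get distinct values. -/
theorem perturbed_instance_nondegenerate
    (m : ℕ) (v : Fin 3 → Fin m → ℝ) (hv : ∀ i g, 0 ≤ v i g)
    (ε : ℝ) (hε : 0 < ε)
    (hsep : ∀ (i : Fin 3) (S T : Finset (Fin m)),
      val (v i) S ≠ val (v i) T → ε * 2 ^ (m + 1) < |val (v i) S - val (v i) T|)
    (i : Fin 3) (S T : Finset (Fin m)) (hST : S ≠ T) :
    val (fun g => v i g + ε * 2 ^ ((g : ℕ) + 1)) S ≠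
      val (fun g => v i g + ε * 2 ^ ((g : ℕ) + 1)) T :=
  (perturbed_instance_nondegenerate_general ((Fin.succEmb m).trans Fin.valEmbedding)
    (fun g => g.succ.isLt) (v i) hε fun S T hval => (hsep i S T hval).le).ne hST
end

section
/- Suppose ε > 0 satisfies ε·2^{m+1} < |v_i(S) − v_i(T)| for every agent i and all S, T ⊆ M with v_i(S) ≠ v_i(T). Then every partial allocation X = (X_1, X_2, X_3) that is EFX with respect to the perturbed valuations v'_1, v'_2, v'_3 is also EFX with respect to the original valuations v_1, v_2, v_3. -/
open Finset

/-!
Suppose `v(S) < v(T)`. A nonnegative perturbation can only raise the value of `T`, and if its total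
on `S` is less than `v(T) - v(S)`, it cannot lift `S` up to the original value of `T`. Hence strict
preferences persist, and strong envy under `v` would be strong envy under the perturbed valuation.
The powers `2^1, …, 2^m` sum to less than `2^(m+1)`, which bounds the perturbation of every bundle.
-/

theorem val_add {G : Type*} (u p : G → ℝ) (S : Finset G) :
    val (u + p) S = val u S + val p S :=
  sum_add_distrib

theorem val_nonneg {G : Type*} {p : G → ℝ} (hp : 0 ≤ p) (S : Finset G) : 0 ≤ val p S :=
  sum_nonneg fun g _ => hp g

theorem val_add_lt_val_add {G : Type*} {u p : G → ℝ} {S T : Finset G} (hp : 0 ≤ p)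
    (hgap : val p S < val u T - val u S) : val (u + p) S < val (u + p) T :=
  calc val (u + p) S = val u S + val p S := val_add u p S
    _ < val u T := lt_sub_iff_add_lt'.mp hgap
    _ ≤ val u T + val p T := le_add_of_nonneg_right (val_nonneg hp T)
    _ = val (u + p) T := (val_add u p T).symm

theorem EFX.of_val_lt_val_imp {G : Type*} [DecidableEq G] {v w : Fin 3 → G → ℝ}
    {X : Fin 3 → Finset G} (hX : EFX w X)
    (h : ∀ (i : Fin 3) (S T : Finset G),
      val (v i) S < val (v i) T → val (w i) S < val (w i) T) :
    EFX v X :=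
  fun i j g hg => not_lt.mp fun hlt => (h i _ _ hlt).not_ge (hX i j g hg)

theorem perturbed_efx_implies_efx_general {G : Type*} [DecidableEq G]
    {v p : Fin 3 → G → ℝ} (hp : 0 ≤ p)
    (hgap : ∀ (i : Fin 3) (S T : Finset G),
      val (v i) S < val (v i) T → val (p i) S < val (v i) T - val (v i) S)
    {X : Fin 3 → Finset G} (hX : EFX (v + p) X) :
    EFX v X :=
  hX.of_val_lt_val_imp fun i S T hlt => val_add_lt_val_add (hp i) (hgap i S T hlt)

theorem sum_pow_succ_lt_pow_succ {b m : ℕ} (hb : 2 ≤ b) (S : Finset (Fin m)) :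
    ∑ g ∈ S, b ^ ((g : ℕ) + 1) < b ^ (m + 1) := by
  have hlt : ∀ k ∈ S.map ((Fin.succEmb m).trans Fin.valEmbedding), k < m + 1 := by simp
  simpa using Nat.geomSum_lt hb hlt

theorem val_mul_two_pow_succ_lt {m : ℕ} {ε : ℝ} (hε : 0 < ε) (S : Finset (Fin m)) :
    val (fun g : Fin m => ε * 2 ^ ((g : ℕ) + 1)) S < ε * 2 ^ (m + 1) := by
  have hsum : ∑ g ∈ S, (2 : ℝ) ^ ((g : ℕ) + 1) < 2 ^ (m + 1) :=
    mod_cast sum_pow_succ_lt_pow_succ le_rfl S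
  calc val (fun g : Fin m => ε * 2 ^ ((g : ℕ) + 1)) S
      = ε * ∑ g ∈ S, (2 : ℝ) ^ ((g : ℕ) + 1) := (mul_sum ..).symm
    _ < ε * 2 ^ (m + 1) := mul_lt_mul_of_pos_left hsum hε

/-- If `ε·2^(m+1)` is smaller than every nonzero value gap, every partial allocation that is
EFX for the perturbed valuations `v'_i(g_j) = v_i(g_j) + ε·2^j` is EFX for the original ones. -/
theorem perturbed_efx_implies_efx
    (m : ℕ) (v : Fin 3 → Fin m → ℝ) (hv : ∀ i g, 0 ≤ v i g)
    (ε : ℝ) (hε : 0 < ε)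
    (hsep : ∀ (i : Fin 3) (S T : Finset (Fin m)),
      val (v i) S ≠ val (v i) T → ε * 2 ^ (m + 1) < |val (v i) S - val (v i) T|)
    (X : Fin 3 → Finset (Fin m))
    (hdisj : ∀ i j, i ≠ j → Disjoint (X i) (X j))
    (hEFX' : EFX (fun i g => v i g + ε * 2 ^ ((g : ℕ) + 1)) X) :
    EFX v X :=
  perturbed_efx_implies_efx_general (fun _ _ => by positivity) (fun i S T hlt =>
    (val_mul_two_pow_succ_lt hε S).trans (abs_of_pos (sub_pos.mpr hlt) ▸ hsep i T S hlt.ne')) hEFX'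
end

section
/- Let X be a partial allocation, let g be an unallocated good, and suppose agent i champions agent j; let G_{ij} be a maximum-cardinality subset G of X_j ∪ {g} with v_i((X_j ∪ {g}) ∖ G) > v_i(X_i). Then for every agent k (including i) and every h ∈ (X_j ∪ {g}) ∖ G_{ij}, v_k(((X_j ∪ {g}) ∖ G_{ij}) ∖ {h}) ≤ v_k(X_k). -/
open Finset

/-- `κ_X(i,S)`: the minimum cardinality of a subset `S' ⊆ S` with `v_i(S') > v_i(X_i)`. -/
noncomputable def kappa {G : Type*} (v : G → ℝ) (Xi S : Finset G) : ℕ :=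
  sInf {n : ℕ | ∃ S' ⊆ S, S'.card = n ∧ val v Xi < val v S'}

/-- Agent `i` is a most envious agent for the bundle `S` under allocation `X`. -/
def MostEnvious {G : Type*} (v : Fin 3 → G → ℝ) (X : Fin 3 → Finset G)
    (i : Fin 3) (S : Finset G) : Prop :=
  val (v i) (X i) < val (v i) S ∧
    ∀ k : Fin 3, val (v k) (X k) < val (v k) S →
      kappa (v i) (X i) S ≤ kappa (v k) (X k) S

/-! Let `S = X_j ∪ {g}`. By maximality of `G_ij`, the bundle `S ∖ G_ij` has exactly `κ_X(i, S)`
goods, so a proper subset of it has fewer than `κ_X(i, S)`. If `k` envies `S`, then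
`κ_X(i, S) ≤ κ_X(k, S)`, and so few goods cannot make `k` envious; if `k` does not envy `S`, then
by monotonicity `k` envies no subset of `S`. -/

section Bundles

variable {G : Type*} {v : G → ℝ} {A S T : Finset G}

theorem val_le_val_of_subset (hv : ∀ x ∈ S, 0 ≤ v x) (hTS : T ⊆ S) : val v T ≤ val v S :=
  sum_le_sum_of_subset_of_nonneg hTS fun x hx _ => hv x hx

theorem kappa_le_card (hTS : T ⊆ S) (hT : val v A < val v T) : kappa v A S ≤ #T :=
  Nat.sInf_le ⟨T, hTS, rfl, hT⟩

theorem exists_subset_card_eq_kappa (hTS : T ⊆ S) (hT : val v A < val v T) :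
    ∃ U ⊆ S, #U = kappa v A S ∧ val v A < val v U :=
  Nat.sInf_mem (s := {n | ∃ U ⊆ S, #U = n ∧ val v A < val v U}) ⟨#T, T, hTS, rfl, hT⟩

theorem val_le_of_card_lt_kappa (hTS : T ⊆ S) (hcard : #T < kappa v A S) : val v T ≤ val v A :=
  le_of_not_gt fun hT => (kappa_le_card hTS hT).not_gt hcard

theorem card_sdiff_eq_kappa [DecidableEq G] {R : Finset G} (hRS : R ⊆ S)
    (henvy : val v A < val v (S \ R))
    (hmax : ∀ R' ⊆ S, val v A < val v (S \ R') → #R' ≤ #R) :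
    #(S \ R) = kappa v A S := by
  refine le_antisymm ?_ (kappa_le_card sdiff_subset henvy)
  obtain ⟨U, hUS, hUcard, hU⟩ := exists_subset_card_eq_kappa sdiff_subset henvy
  have hle : #(S \ U) ≤ #R := hmax _ sdiff_subset (by rwa [Finset.sdiff_sdiff_eq_self hUS])
  have hUadd : #(S \ U) + #U = #S := card_sdiff_add_card_eq_card hUS
  have hRadd : #(S \ R) + #R = #S := card_sdiff_add_card_eq_card hRS
  lia

end Bundles

theorem nobody_strongly_envies_champion_bundle_general {ι G : Type*} [DecidableEq G]
    {v : ι → G → ℝ} {X : ι → Finset G} {S R T : Finset G} {i k : ι}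
    (hv : ∀ x ∈ S, 0 ≤ v k x)
    (hmin : ∀ l, val (v l) (X l) < val (v l) S →
      kappa (v i) (X i) S ≤ kappa (v l) (X l) S)
    (hRS : R ⊆ S) (henvy : val (v i) (X i) < val (v i) (S \ R))
    (hmax : ∀ R' ⊆ S, val (v i) (X i) < val (v i) (S \ R') → #R' ≤ #R)
    (hT : T ⊂ S \ R) :
    val (v k) T ≤ val (v k) (X k) := by
  have hTS : T ⊆ S := hT.subset.trans sdiff_subset
  rcases le_or_gt (val (v k) S) (val (v k) (X k)) with hle | hlt
  · exact (val_le_val_of_subset hv hTS).trans hle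
  · refine val_le_of_card_lt_kappa hTS ?_
    calc #T < #(S \ R) := card_lt_card hT
      _ = kappa (v i) (X i) S := card_sdiff_eq_kappa hRS henvy hmax
      _ ≤ kappa (v k) (X k) S := hmin k hlt

/-- Observation 4 (part 1): if `i` champions `j` and `G_ij` is a maximum-cardinality subset
of `X_j ∪ {g}` whose removal leaves a bundle `i` still envies, then after removing any
further good `h`, no agent `k` prefers the resulting bundle to his own. -/
theorem nobody_strongly_envies_champion_bundle {G : Type*} [DecidableEq G] (M : Finset G)
    (v : Fin 3 → G → ℝ) (hv : ∀ i : Fin 3, ∀ g ∈ M, 0 ≤ v i g)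
    (X : Fin 3 → Finset G) (hXM : ∀ i, X i ⊆ M)
    (hdisj : ∀ i j, i ≠ j → Disjoint (X i) (X j))
    (g : G) (hg : g ∈ M) (hun : g ∉ X 0 ∪ X 1 ∪ X 2)
    (i j : Fin 3) (hch : MostEnvious v X i (X j ∪ {g}))
    (Gij : Finset G) (hGsub : Gij ⊆ X j ∪ {g})
    (hGval : val (v i) (X i) < val (v i) ((X j ∪ {g}) \ Gij))
    (hGmax : ∀ G' ⊆ X j ∪ {g},
      val (v i) (X i) < val (v i) ((X j ∪ {g}) \ G') → G'.card ≤ Gij.card)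
    (k : Fin 3) (h : G) (hh : h ∈ (X j ∪ {g}) \ Gij) :
    val (v k) (((X j ∪ {g}) \ Gij) \ {h}) ≤ val (v k) (X k) := by
  have hSM : X j ∪ {g} ⊆ M := union_subset (hXM j) (singleton_subset_iff.2 hg)
  exact nobody_strongly_envies_champion_bundle_general (fun x hx => hv k x (hSM hx)) hch.2
    hGsub hGval hGmax (sdiff_ssubset (singleton_subset_iff.2 hh) (singleton_nonempty h))
end

section
/- In a non-degenerate instance, let X be a partial EFX allocation and g an unallocated good, and let s be an agent. Suppose either (a) the envy graph E_X is acyclic and s is its unique source, or (b) s is a most envious agent for X_s ∪ {g} (the champion graph has a 1-cycle at s). Then there exists a partial EFX allocation Y with Y_1 ∪ Y_2 ∪ Y_3 ⊆ X_1 ∪ X_2 ∪ X_3 ∪ {g} such that v_j(Y_j) ≥ v_j(X_j) for every agent j and v_s(Y_s) > v_s(X_s). -/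
open Finset

/-!
Let `t` be a most envious agent for `X_s ∪ {g}`. By minimality of `κ`, a smallest subset `Z` of
`X_s ∪ {g}` that `t` prefers to `X_t` is strongly envied by nobody. If `s` reaches `t` in the envy
graph, give `Z` to `t` and let every other agent on a simple path from `s` to `t` take the bundle of
its successor: the bundles in use are `Z` and old ones, nobody loses, and `s` gains. In case (b) the
path is trivial. In case (a) walking backwards along envy edges from any agent ends at a source, so
`s` reaches every agent.
-/

section Paths

variable {ι : Type*} {r : ι → ι → Prop} {s t : ι}

lemma wellFounded_of_finite_of_acyclic [Finite ι] (hacyc : ∀ i, ¬ Relation.TransGen r i i) :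
    WellFounded r :=
  have : Std.Irrefl (Relation.TransGen r) := ⟨hacyc⟩
  Subrelation.wf Relation.TransGen.single
    (Finite.wellFounded_of_trans_of_irrefl (Relation.TransGen r))

lemma reflTransGen_of_wellFounded_of_unique_source (hwf : WellFounded r)
    (huniq : ∀ j, (∀ i, ¬ r i j) → j = s) (t : ι) : Relation.ReflTransGen r s t := by
  induction t using hwf.induction with
  | _ t ih =>
    by_cases ht : ∀ i, ¬ r i t
    · rw [huniq t ht]
    · push Not at ht
      obtain ⟨i, hit⟩ := ht
      exact (ih i hit).tail hit

lemma exists_nodup_isChain_cons_of_reflTransGen (h : Relation.ReflTransGen r s t) :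
    ∃ l : List ι, (s :: l).Nodup ∧ (s :: l).IsChain r ∧
      (s :: l).getLast (List.cons_ne_nil s l) = t := by
  induction h using Relation.ReflTransGen.head_induction_on with
  | refl => exact ⟨[], List.nodup_singleton t, .singleton t, rfl⟩
  | @head a b hab _ ih =>
    obtain ⟨l, hnodup, hchain, hlast⟩ := ih
    by_cases ha : a ∈ b :: l
    · obtain ⟨p, q, hpq⟩ := List.append_of_mem ha
      have hsuffix : a :: q <:+ b :: l := ⟨p, hpq.symm⟩
      refine ⟨q, hnodup.sublist hsuffix.sublist, hchain.suffix hsuffix, ?_⟩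
      rw [← hlast, hsuffix.getLast (List.cons_ne_nil a q)]
    · exact ⟨b :: l, List.nodup_cons.2 ⟨ha, hnodup⟩, .cons_cons hab hchain, hlast⟩

lemma exists_perm_of_reflTransGen (h : Relation.ReflTransGen r s t) :
    ∃ π : Equiv.Perm ι, π t = s ∧ ∀ i ≠ t, π i = i ∨ r i (π i) := by
  classical
  obtain ⟨l, hnodup, hchain, rfl⟩ := exists_nodup_isChain_cons_of_reflTransGen h
  refine ⟨(s :: l).formPerm, List.formPerm_apply_getLast s l, fun i hi => ?_⟩
  by_cases hmem : i ∈ s :: l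
  · right
    obtain ⟨n, hn, rfl⟩ := List.mem_iff_getElem.1 hmem
    have hn' : n + 1 < (s :: l).length := by
      refine lt_of_le_of_ne hn fun hlen => hi ?_
      simp only [List.getLast_eq_getElem, ← hlen, Nat.add_sub_cancel]
    rw [List.formPerm_apply_lt_getElem _ hnodup n hn']
    exact List.isChain_iff_getElem.1 hchain n hn'
  · exact .inl (List.formPerm_apply_of_notMem hmem)

end Paths

section Allocations

variable {ι G α : Type*} [LinearOrder α]

/-- The edge relation of the envy graph: `i` prefers the bundle of `j` to its own. -/
def Envies (u : ι → Finset G → α) (X : ι → Finset G) (i j : ι) : Prop :=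
  u i (X i) < u i (X j)

/-- No agent strongly envies a holder of the bundle `B`: removing any good from `B` eliminates
envy. -/
def NotStronglyEnvied [DecidableEq G] (u : ι → Finset G → α) (X : ι → Finset G)
    (B : Finset G) : Prop :=
  ∀ i, ∀ h ∈ B, u i (B \ {h}) ≤ u i (X i)

/-- A partial EFX allocation, for arbitrary agents and arbitrary valuations of bundles. -/
structure IsEFXAllocation [DecidableEq G] (u : ι → Finset G → α) (X : ι → Finset G) : Prop where
  pairwise_disjoint : Pairwise (Function.onFun Disjoint X)
  notStronglyEnvied : ∀ j, NotStronglyEnvied u X (X j)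

/-- The number `κ` for an agent with valuation `w` holding a bundle of value `a`: the least size of
a subset of `S` worth more than `a` (and `0` if there is none). -/
noncomputable def minEnviedCard (w : Finset G → α) (a : α) (S : Finset G) : ℕ :=
  sInf {n : ℕ | ∃ T ⊆ S, T.card = n ∧ a < w T}

/-- `t` is a most envious agent for the bundle `S`, for arbitrary agents and arbitrary valuations of
bundles. -/
def IsMostEnvious (u : ι → Finset G → α) (X : ι → Finset G) (t : ι) (S : Finset G) : Prop :=
  u t (X t) < u t S ∧
    ∀ k, u k (X k) < u k S → minEnviedCard (u t) (u t (X t)) S ≤ minEnviedCard (u k) (u k (X k)) S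

variable {w : Finset G → α} {a : α} {u : ι → Finset G → α} {X : ι → Finset G} {S T : Finset G}
  {g : G} {s t : ι}

lemma minEnviedCard_le_card (hT : T ⊆ S) (h : a < w T) : minEnviedCard w a S ≤ T.card :=
  Nat.sInf_le ⟨T, hT, rfl, h⟩

lemma exists_subset_card_eq_minEnviedCard (h : a < w S) :
    ∃ T ⊆ S, T.card = minEnviedCard w a S ∧ a < w T :=
  Nat.sInf_mem (s := {n : ℕ | ∃ T ⊆ S, T.card = n ∧ a < w T}) ⟨S.card, S, Subset.rfl, rfl, h⟩

lemma exists_isMostEnvious (h : u s (X s) < u s S) : ∃ t, IsMostEnvious u X t S := by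
  obtain ⟨t, ht⟩ := exists_minimalFor_of_wellFoundedLT (fun k => u k (X k) < u k S)
    (fun k => minEnviedCard (u k) (u k (X k)) S) ⟨s, h⟩
  exact ⟨t, ht.prop, fun k hk => not_lt.1 fun hlt => (minimalFor_iff_forall_lt.1 ht).2 hlt hk⟩

variable [DecidableEq G]

lemma IsMostEnvious.exists_subset_notStronglyEnvied (ht : IsMostEnvious u X t S)
    (hmono : ∀ i, MonotoneOn (u i) (Set.Iic S)) :
    ∃ Z ⊆ S, u t (X t) < u t Z ∧ NotStronglyEnvied u X Z := by
  obtain ⟨Z, hZS, hcard, hZ⟩ := exists_subset_card_eq_minEnviedCard ht.1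
  refine ⟨Z, hZS, hZ, fun i h hh => ?_⟩
  by_contra! hlt
  have hsub : Z \ {h} ⊆ S := sdiff_subset.trans hZS
  have henvy : u i (X i) < u i S := hlt.trans_le (hmono i hsub Set.self_mem_Iic hsub)
  have hle : Z.card ≤ (Z \ {h}).card := calc
    Z.card = minEnviedCard (u t) (u t (X t)) S := hcard
    _ ≤ minEnviedCard (u i) (u i (X i)) S := ht.2 i henvy
    _ ≤ (Z \ {h}).card := minEnviedCard_le_card hsub hlt
  rw [sdiff_singleton_eq_erase] at hle
  exact hle.not_gt (card_erase_lt_of_mem hh)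

lemma pairwise_disjoint_update_union_singleton [DecidableEq ι]
    (hX : Pairwise (Function.onFun Disjoint X)) (hg : ∀ i, g ∉ X i) (s : ι) :
    Pairwise (Function.onFun Disjoint (Function.update X s (X s ∪ {g}))) := by
  have hnew (j : ι) (hj : j ≠ s) : Disjoint (X s ∪ {g}) (X j) :=
    disjoint_union_left.2 ⟨hX hj.symm, disjoint_singleton_left.2 (hg j)⟩
  intro i j hij
  rcases eq_or_ne i s with rfl | hi
  · simpa only [Function.onFun, Function.update_self, Function.update_of_ne hij.symm]
      using hnew j hij.symm
  rcases eq_or_ne j s with rfl | hj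
  · simpa only [Function.onFun, Function.update_self, Function.update_of_ne hi]
      using (hnew i hi).symm
  · simpa only [Function.onFun, Function.update_of_ne hi, Function.update_of_ne hj] using hX hij

/-- The permutation `π` records which old bundle each agent receives; the bundle received by `t` is
enlarged by `g` and then shrunk to `Z`. -/
lemma IsEFXAllocation.update_comp_perm [DecidableEq ι] (hX : IsEFXAllocation u X)
    (hg : ∀ i, g ∉ X i) {π : Equiv.Perm ι} {Z : Finset G} (hZ : Z ⊆ X (π t) ∪ {g})
    (hZu : NotStronglyEnvied u X Z)
    (hle : ∀ i, u i (X i) ≤ u i (Function.update (X ∘ π) t Z i)) :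
    IsEFXAllocation u (Function.update (X ∘ π) t Z) where
  pairwise_disjoint := by
    have hsub : ∀ i, Function.update (X ∘ π) t Z i ⊆
        Function.update X (π t) (X (π t) ∪ {g}) (π i) :=
      (Function.forall_update_iff _ fun i B =>
        B ⊆ Function.update X (π t) (X (π t) ∪ {g}) (π i)).2
        ⟨by rwa [Function.update_self], fun i hi => by
          rw [Function.update_of_ne (π.injective.ne hi), Function.comp_apply]⟩
    have hdisj := pairwise_disjoint_update_union_singleton hX.pairwise_disjoint hg (π t)
    exact (hdisj.comp_of_injective π.injective).mono fun i j h => h.mono (hsub i) (hsub j)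
  notStronglyEnvied := by
    have hold : ∀ j, NotStronglyEnvied u X (Function.update (X ∘ π) t Z j) :=
      (Function.forall_update_iff _ fun _ B => NotStronglyEnvied u X B).2
        ⟨hZu, fun j _ => hX.notStronglyEnvied (π j)⟩
    exact fun j i h hh => (hold j i h hh).trans (hle i)

theorem IsEFXAllocation.exists_dominating_of_reflTransGen (hX : IsEFXAllocation u X)
    (hg : ∀ i, g ∉ X i) (hmono : ∀ i, MonotoneOn (u i) (Set.Iic (X s ∪ {g})))
    (ht : IsMostEnvious u X t (X s ∪ {g})) (hst : Relation.ReflTransGen (Envies u X) s t) :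
    ∃ Y : ι → Finset G, IsEFXAllocation u Y ∧ (∀ i, ∃ j, Y i ⊆ X j ∪ {g}) ∧
      (∀ j, u j (X j) ≤ u j (Y j)) ∧ u s (X s) < u s (Y s) := by
  classical
  obtain ⟨Z, hZS, hZ, hZu⟩ := ht.exists_subset_notStronglyEnvied hmono
  obtain ⟨π, rfl, hπ⟩ := exists_perm_of_reflTransGen hst
  have hle : ∀ i, u i (X i) ≤ u i (Function.update (X ∘ π) t Z i) :=
    (Function.forall_update_iff _ fun i B => u i (X i) ≤ u i B).2 ⟨hZ.le, fun i hi =>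
      (hπ i hi).elim (fun h => by rw [Function.comp_apply, h]) le_of_lt⟩
  refine ⟨Function.update (X ∘ π) t Z, hX.update_comp_perm hg hZS hZu hle,
    (Function.forall_update_iff _ fun _ B => ∃ j, B ⊆ X j ∪ {g}).2
      ⟨⟨π t, hZS⟩, fun i _ => ⟨π i, subset_union_left⟩⟩, hle, ?_⟩
  rcases eq_or_ne (π t) t with hfix | hmove
  · rwa [hfix, Function.update_self]
  · rw [Function.update_of_ne hmove]
    exact (hπ (π t) hmove).resolve_left (π.injective.ne hmove)

theorem single_source_or_self_champion_dominating_general [Finite ι] (hX : IsEFXAllocation u X)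
    (hg : ∀ i, g ∉ X i) (hmono : ∀ i, MonotoneOn (u i) (Set.Iic (X s ∪ {g})))
    (hcase :
      ((∀ i, ¬ Relation.TransGen (Envies u X) i i) ∧
        (∀ j, (∀ i, ¬ Envies u X i j) → j = s) ∧ u s (X s) < u s (X s ∪ {g})) ∨
      IsMostEnvious u X s (X s ∪ {g})) :
    ∃ Y : ι → Finset G, IsEFXAllocation u Y ∧ (∀ i, ∃ j, Y i ⊆ X j ∪ {g}) ∧
      (∀ j, u j (X j) ≤ u j (Y j)) ∧ u s (X s) < u s (Y s) := by
  rcases hcase with ⟨hacyc, huniq, hlt⟩ | hself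
  · obtain ⟨t, ht⟩ := exists_isMostEnvious hlt
    have hwf := wellFounded_of_finite_of_acyclic hacyc
    exact hX.exists_dominating_of_reflTransGen hg hmono ht
      (reflTransGen_of_wellFounded_of_unique_source hwf huniq t)
  · exact hX.exists_dominating_of_reflTransGen hg hmono hself .refl

end Allocations

lemma monotoneOn_val {G : Type*} {v : G → ℝ} {S : Finset G} (hv : ∀ g ∈ S, 0 ≤ v g) :
    MonotoneOn (val v) (Set.Iic S) :=
  fun _ _ _ hB hAB => sum_le_sum_of_subset_of_nonneg hAB fun g hg _ => hv g (hB hg)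

lemma subset_union_fin_three {G : Type*} [DecidableEq G] (X : Fin 3 → Finset G) (i : Fin 3) :
    X i ⊆ X 0 ∪ X 1 ∪ X 2 := by
  intro h hh
  fin_cases i <;> simp_all

/-- In a non-degenerate instance, if `s` is the unique source of the (acyclic) envy graph,
or `s` champions himself, then there is a Pareto dominating partial EFX allocation in which
`s` is strictly better off. -/
theorem single_source_or_self_champion_dominating {G : Type*} [DecidableEq G] (M : Finset G)
    (v : Fin 3 → G → ℝ) (hv : ∀ i : Fin 3, ∀ g ∈ M, 0 ≤ v i g)
    (hnd : ∀ i : Fin 3, ∀ S ⊆ M, ∀ T ⊆ M, S ≠ T → val (v i) S ≠ val (v i) T)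
    (X : Fin 3 → Finset G) (hXM : ∀ i, X i ⊆ M)
    (hdisj : ∀ i j, i ≠ j → Disjoint (X i) (X j))
    (hEFX : EFX v X)
    (g : G) (hg : g ∈ M) (hun : g ∉ X 0 ∪ X 1 ∪ X 2)
    (s : Fin 3)
    (hcase :
      ((∀ i : Fin 3, ¬ Relation.TransGen
          (fun a b => val (v a) (X a) < val (v a) (X b)) i i) ∧
        (∀ i : Fin 3, ¬ val (v i) (X i) < val (v i) (X s)) ∧
        (∀ j : Fin 3, (∀ i : Fin 3, ¬ val (v i) (X i) < val (v i) (X j)) → j = s)) ∨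
      MostEnvious v X s (X s ∪ {g})) :
    ∃ Y : Fin 3 → Finset G,
      (∀ i, Y i ⊆ M) ∧
      (∀ i j, i ≠ j → Disjoint (Y i) (Y j)) ∧
      Y 0 ∪ Y 1 ∪ Y 2 ⊆ X 0 ∪ X 1 ∪ X 2 ∪ {g} ∧
      EFX v Y ∧
      (∀ j, val (v j) (X j) ≤ val (v j) (Y j)) ∧
      val (v s) (X s) < val (v s) (Y s) := by
  have hgX (i : Fin 3) : g ∉ X i := fun h => hun (subset_union_fin_three X i h)
  have hSM (i : Fin 3) : X i ∪ {g} ⊆ M := union_subset (hXM i) (singleton_subset_iff.2 hg)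
  have hmono (i : Fin 3) : MonotoneOn (val (v i)) (Set.Iic (X s ∪ {g})) :=
    monotoneOn_val fun h hh => hv i h (hSM s hh)
  have hlt : val (v s) (X s) < val (v s) (X s ∪ {g}) :=
    (hmono s subset_union_left Set.self_mem_Iic subset_union_left).lt_of_ne <|
      hnd s _ (hXM s) _ (hSM s) fun h => hgX s (union_eq_left.1 h.symm (mem_singleton_self g))
  obtain ⟨Y, hY, hYX, hle, hYs⟩ := single_source_or_self_champion_dominating_general
    (u := fun i => val (v i)) ⟨fun i j => hdisj i j, fun j i => hEFX i j⟩ hgX hmono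
    (hcase.imp_left fun ⟨hacyc, _, huniq⟩ => ⟨hacyc, huniq, hlt⟩)
  have hYU (i : Fin 3) : Y i ⊆ X 0 ∪ X 1 ∪ X 2 ∪ {g} :=
    (hYX i).elim fun j hj => hj.trans (union_subset_union_left (subset_union_fin_three X j))
  exact ⟨Y, fun i => (hYX i).elim fun j hj => hj.trans (hSM j),
    fun i j hij => hY.pairwise_disjoint hij, union_subset (union_subset (hYU 0) (hYU 1)) (hYU 2),
    fun i j => hY.notStronglyEnvied j i, hle, hYs⟩
end

section
/- Let X be a partial allocation and g an unallocated good. Suppose agent i champions agent j and v_i(X_i) ≥ v_i(X_j), and let G_{ij} be a maximum-cardinality subset G of X_j ∪ {g} with v_i((X_j ∪ {g}) ∖ G) > v_i(X_i). Then g ∉ G_{ij} (hence G_{ij} ⊆ X_j) and v_i(G_{ij}) < v_i(g). -/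
open Finset

/-!
If agent `i` does not envy `j`, every bundle that `i` strictly prefers to `X i` is worth more to
`i` than `X j`, so by monotonicity it is not contained in `X j`. Hence `g` survives the removal of
`Gij`. Removing `Gij` from `X j ∪ {g}` leaves more than the value of `X j`, so it costs less than
what adding `g` gained.
-/

section

variable {G R : Type*} [AddCommMonoid R] [PartialOrder R] {v : G → R} {g : G} {S T D : Finset G}

theorem not_subset_of_sum_lt_sum [IsOrderedAddMonoid R] (hv : ∀ x ∈ S, 0 ≤ v x)
    (hlt : ∑ x ∈ S, v x < ∑ x ∈ T, v x) : ¬T ⊆ S := fun hTS =>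
  (sum_le_sum_of_subset_of_nonneg hTS fun x hx _ => hv x hx).not_gt hlt

variable [DecidableEq G]

theorem notMem_of_not_insert_sdiff_subset (h : ¬insert g S \ D ⊆ S) : g ∉ S ∧ g ∉ D := by
  refine ⟨fun hgS => h ?_, fun hgD => h ?_⟩
  · exact sdiff_subset.trans (insert_subset hgS Subset.rfl)
  · rw [insert_sdiff_of_mem S hgD]
    exact sdiff_subset

theorem sum_lt_of_sum_lt_sum_insert_sdiff [IsOrderedCancelAddMonoid R] (hg : g ∉ S)
    (hD : D ⊆ insert g S) (hlt : ∑ x ∈ S, v x < ∑ x ∈ insert g S \ D, v x) :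
    ∑ x ∈ D, v x < v g := by
  refine lt_of_add_lt_add_left (a := ∑ x ∈ S, v x) ?_
  calc ∑ x ∈ S, v x + ∑ x ∈ D, v x
      < ∑ x ∈ insert g S \ D, v x + ∑ x ∈ D, v x := by gcongr
    _ = ∑ x ∈ insert g S, v x := sum_sdiff hD
    _ = ∑ x ∈ S, v x + v g := by rw [sum_insert hg, add_comm]

theorem champion_no_envy_lower_half_general [IsOrderedCancelAddMonoid R] {A : Finset G}
    (hv : ∀ x ∈ S, 0 ≤ v x) (hnoenvy : ∑ x ∈ S, v x ≤ ∑ x ∈ A, v x)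
    (hD : D ⊆ insert g S) (henvy : ∑ x ∈ A, v x < ∑ x ∈ insert g S \ D, v x) :
    g ∉ D ∧ D ⊆ S ∧ ∑ x ∈ D, v x < v g := by
  have hlt := hnoenvy.trans_lt henvy
  obtain ⟨hgS, hgD⟩ := notMem_of_not_insert_sdiff_subset (not_subset_of_sum_lt_sum hv hlt)
  exact ⟨hgD, (subset_insert_iff_of_notMem hgD).1 hD, sum_lt_of_sum_lt_sum_insert_sdiff hgS hD hlt⟩

end

/-- Observation 6: if `i` champions `j` and does not envy `j`, then the lower-half bundle
`G_ij` does not contain `g` (hence `G_ij ⊆ X_j`) and `v_i(G_ij) < v_i(g)`. -/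
theorem champion_no_envy_lower_half {G : Type*} [DecidableEq G] (M : Finset G)
    (v : Fin 3 → G → ℝ) (hv : ∀ i : Fin 3, ∀ g ∈ M, 0 ≤ v i g)
    (X : Fin 3 → Finset G) (hXM : ∀ i, X i ⊆ M)
    (hdisj : ∀ i j, i ≠ j → Disjoint (X i) (X j))
    (g : G) (hg : g ∈ M) (hun : g ∉ X 0 ∪ X 1 ∪ X 2)
    (i j : Fin 3) (hch : MostEnvious v X i (X j ∪ {g}))
    (hnoenvy : val (v i) (X j) ≤ val (v i) (X i))
    (Gij : Finset G) (hGsub : Gij ⊆ X j ∪ {g})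
    (hGval : val (v i) (X i) < val (v i) ((X j ∪ {g}) \ Gij))
    (hGmax : ∀ G' ⊆ X j ∪ {g},
      val (v i) (X i) < val (v i) ((X j ∪ {g}) \ G') → G'.card ≤ Gij.card) :
    g ∉ Gij ∧ Gij ⊆ X j ∧ val (v i) Gij < v i g := by
  rw [union_singleton] at hGsub hGval
  exact champion_no_envy_lower_half_general (fun x hx => hv i x (hXM j hx)) hnoenvy hGsub hGval
end

section
/- In a non-degenerate instance, let X be a partial EFX allocation that is envy-free (v_i(X_i) ≥ v_i(X_j) for all agents i, j, equivalently the envy graph E_X has three sources), and let g be an unallocated good. Then there exists a partial EFX allocation Y with Y_1 ∪ Y_2 ∪ Y_3 ⊆ X_1 ∪ X_2 ∪ X_3 ∪ {g} that Pareto dominates X. -/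
open Finset

/-!
Each agent `j` keeps a part `T j` of its bundle `X j` such that `T j` together with `g` is worth,
to every agent, no more than the agent's own bundle once any good is removed. Say that `k`
champions `j` if `k` prefers `T j ∪ {g}` to `X k`. Whoever values `g` has a champion, and every
champion values `g`; so either some agent champions itself and takes `T j ∪ {g}`, or champions
form a cycle of length two or three. Along a cycle an agent trades its kept part for the one it
champions, and the discarded parts `X j \ T j` can be redistributed without creating strong envy.
In a cycle of length three, how to do so depends on whether two of the agents gain, or two of them
do not gain, by exchanging their own discarded part for that of the agent championing them.
-/

section Definitions

variable {G : Type*} [DecidableEq G]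

/-- For an agent with valuation `w` whose own bundle is worth `t`, the bundle `S` is tolerable if it
is worth at most `t` after the removal of any good: the agent does not strongly envy its owner. -/
def Tolerable (w : G → ℝ) (t : ℝ) (S : Finset G) : Prop :=
  ∀ h ∈ S, val w (S \ {h}) ≤ t

/-- Some EFX allocation of goods from `W` Pareto dominates `X`. -/
def HasDominatingEFX (v : Fin 3 → G → ℝ) (X : Fin 3 → Finset G) (W : Finset G) : Prop :=
  ∃ Y : Fin 3 → Finset G, (∀ i, Y i ⊆ W) ∧ (∀ i j, i ≠ j → Disjoint (Y i) (Y j)) ∧ EFX v Y ∧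
    (∀ i, val (v i) (X i) ≤ val (v i) (Y i)) ∧ ∃ i, val (v i) (X i) < val (v i) (Y i)

/-- Agent `k` champions agent `j` with respect to the good `g` and the kept parts `T`: it prefers
`g` together with the kept part of `j` to its own bundle. -/
def Champions (v : Fin 3 → G → ℝ) (X T : Fin 3 → Finset G) (g : G) (k j : Fin 3) : Prop :=
  val (v k) (X k) < val (v k) (insert g (T j))

/-- The kept part of `X i` together with the discarded part of `X j`. -/
def recombine (X T : Fin 3 → Finset G) (i j : Fin 3) : Finset G :=
  T i ∪ (X j \ T j)

/-- An envy-free allocation `X` of goods from `W`, an unallocated good `g` of `W`, and for each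
agent `j` a kept part `T j` of `X j` to which `g` can be added without causing strong envy. -/
structure EnvyFreeSplit (v : Fin 3 → G → ℝ) (X T : Fin 3 → Finset G) (g : G) (W : Finset G) :
    Prop where
  nonneg : ∀ i, ∀ h ∈ W, 0 ≤ v i h
  subset : ∀ i, X i ⊆ W
  disjoint : ∀ i j, i ≠ j → Disjoint (X i) (X j)
  envyFree : ∀ i j, val (v i) (X j) ≤ val (v i) (X i)
  mem : g ∈ W
  notMem : ∀ i, g ∉ X i
  kept_subset : ∀ i, T i ⊆ X i
  tolerable : ∀ i j, Tolerable (v i) (val (v i) (X i)) (insert g (T j))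

end Definitions

section Bundles

lemma val_mono {G : Type*} {w : G → ℝ} {S T : Finset G} (hw : ∀ h ∈ T, 0 ≤ w h) (hST : S ⊆ T) :
    val w S ≤ val w T :=
  sum_le_sum_of_subset_of_nonneg hST fun h hh _ => hw h hh

variable {G : Type*} [DecidableEq G]

lemma val_insert (w : G → ℝ) {S : Finset G} {g : G} (hg : g ∉ S) :
    val w (insert g S) = w g + val w S :=
  sum_insert hg

lemma tolerable_of_val_le {w : G → ℝ} {t : ℝ} {S : Finset G} (hw : ∀ h ∈ S, 0 ≤ w h)
    (hS : val w S ≤ t) : Tolerable w t S :=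
  fun _ _ => (val_mono hw sdiff_subset).trans hS

lemma exists_tolerable_subset {ι : Type*} (v : ι → G → ℝ) (t : ι → ℝ) (S : Finset G) :
    ∃ P ⊆ S, (∀ i, Tolerable (v i) (t i) P) ∧ (P = S ∨ ∃ i, t i < val (v i) P) := by
  induction S using Finset.strongInduction with
  | H S ih =>
    by_cases hS : ∀ i, Tolerable (v i) (t i) S
    · exact ⟨S, Subset.rfl, hS, .inl rfl⟩
    · simp only [Tolerable, not_forall, not_le] at hS
      obtain ⟨i, h, hh, hlt⟩ := hS
      obtain ⟨P, hPS, hP, hpref⟩ := ih (S \ {h}) (sdiff_ssubset (by simpa using hh) (by simp))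
      refine ⟨P, hPS.trans sdiff_subset, hP, .inr ?_⟩
      rcases hpref with rfl | hpref
      exacts [⟨i, hlt⟩, hpref]

lemma exists_kept_part {ι : Type*} {v : ι → G → ℝ} {X : ι → Finset G} {g : G} {j : ι}
    (hv : ∀ i, ∀ h ∈ X j, 0 ≤ v i h) (hEF : ∀ i, val (v i) (X j) ≤ val (v i) (X i))
    (hg : g ∉ X j) :
    ∃ T ⊆ X j, (∀ i, Tolerable (v i) (val (v i) (X i)) (insert g T)) ∧
      (0 < v j g → ∃ i, val (v i) (X i) < val (v i) (insert g T)) := by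
  obtain ⟨P, hPs, hPtol, hpref⟩ :=
    exists_tolerable_subset v (fun i => val (v i) (X i)) (insert g (X j))
  have hgP : g ∈ P := by
    rcases hpref with rfl | ⟨i, hi⟩
    · exact mem_insert_self g _
    · by_contra hgP
      have hPX : P ⊆ X j := (subset_insert_iff_of_notMem hgP).1 hPs
      exact hi.not_ge ((val_mono (hv i) hPX).trans (hEF i))
  refine ⟨P.erase g, subset_insert_iff.1 hPs, ?_, fun hpos => ?_⟩ <;> rw [insert_erase hgP]
  · exact hPtol
  · rcases hpref with rfl | hpref
    · exact ⟨j, by rw [val_insert _ hg]; linarith⟩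
    · exact hpref

end Bundles

section Agents

lemma forall_fin_three_of_ne {p : Fin 3 → Prop} {a b c : Fin 3} (hab : a ≠ b) (hbc : b ≠ c)
    (hca : c ≠ a) (ha : p a) (hb : p b) (hc : p c) (i : Fin 3) : p i := by
  obtain rfl | rfl | rfl : i = a ∨ i = b ∨ i = c := by lia
  exacts [ha, hb, hc]

lemma exists_fin_three_ne_ne (a b : Fin 3) : ∃ c, b ≠ c ∧ c ≠ a := by
  decide +revert

end Agents

section DominatingAllocations

variable {G : Type*} [DecidableEq G] {v : Fin 3 → G → ℝ} {X T : Fin 3 → Finset G} {g : G}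
  {W : Finset G}

lemma hasDominatingEFX_of_tolerable {Y : Fin 3 → Finset G} (hv : ∀ i, ∀ h ∈ W, 0 ≤ v i h)
    (hYW : ∀ i, Y i ⊆ W) (hY : ∀ i j, i ≠ j → Disjoint (Y i) (Y j))
    (htol : ∀ i j, i ≠ j → Tolerable (v i) (val (v i) (X i)) (Y j))
    (hle : ∀ i, val (v i) (X i) ≤ val (v i) (Y i))
    (hlt : ∃ i, val (v i) (X i) < val (v i) (Y i)) : HasDominatingEFX v X W := by
  refine ⟨Y, hYW, hY, fun i j h hh => ?_, hle, hlt⟩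
  obtain rfl | hij := eq_or_ne i j
  · exact val_mono (fun x hx => hv i x (hYW i hx)) sdiff_subset
  · exact (htol i j hij h hh).trans (hle i)

lemma hasDominatingEFX_of_bundles {a b c : Fin 3} {P Q R : Finset G}
    (hv : ∀ i, ∀ h ∈ W, 0 ≤ v i h) (hab : a ≠ b) (hbc : b ≠ c) (hca : c ≠ a)
    (hP : P ⊆ W) (hQ : Q ⊆ W) (hR : R ⊆ W)
    (hPQ : Disjoint P Q) (hQR : Disjoint Q R) (hPR : Disjoint P R)
    (ha : val (v a) (X a) < val (v a) P) (hb : val (v b) (X b) ≤ val (v b) Q)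
    (hc : val (v c) (X c) ≤ val (v c) R)
    (haQ : Tolerable (v a) (val (v a) (X a)) Q) (haR : Tolerable (v a) (val (v a) (X a)) R)
    (hbP : Tolerable (v b) (val (v b) (X b)) P) (hbR : Tolerable (v b) (val (v b) (X b)) R)
    (hcP : Tolerable (v c) (val (v c) (X c)) P) (hcQ : Tolerable (v c) (val (v c) (X c)) Q) :
    HasDominatingEFX v X W := by
  let Y : Fin 3 → Finset G := fun i => if i = a then P else if i = b then Q else R
  have hYa : Y a = P := by simp [Y]
  have hYb : Y b = Q := by simp [Y, hab.symm]
  have hYc : Y c = R := by simp [Y, hca, hbc.symm]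
  have hall {p : Fin 3 → Prop} := forall_fin_three_of_ne (p := p) hab hbc hca
  refine hasDominatingEFX_of_tolerable (Y := Y) hv (hall ?_ ?_ ?_)
    (hall (hall ?_ ?_ ?_) (hall ?_ ?_ ?_) (hall ?_ ?_ ?_))
    (hall (hall ?_ ?_ ?_) (hall ?_ ?_ ?_) (hall ?_ ?_ ?_)) (hall ?_ ?_ ?_) ⟨a, by rwa [hYa]⟩ <;>
  simp only [hYa, hYb, hYc, ne_eq, not_true_eq_false, false_implies] <;>
  simp only [hP, hQ, hR, hPQ, hQR, hPR, hPQ.symm, hQR.symm, hPR.symm, ha.le, hb, hc,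
    haQ, haR, hbP, hbR, hcP, hcQ, implies_true]

namespace EnvyFreeSplit

section Recombination

variable {i j k l m : Fin 3}

lemma val_insert_kept (hs : EnvyFreeSplit v X T g W) (k j : Fin 3) :
    val (v k) (insert g (T j)) = v k g + val (v k) (T j) :=
  val_insert _ fun hg => hs.notMem j (hs.kept_subset j hg)

lemma recombine_self (hs : EnvyFreeSplit v X T g W) (i : Fin 3) : recombine X T i i = X i :=
  union_sdiff_of_subset (hs.kept_subset i)

lemma disjoint_kept_discarded (hs : EnvyFreeSplit v X T g W) (i j : Fin 3) :
    Disjoint (T i) (X j \ T j) := by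
  obtain rfl | hij := eq_or_ne i j
  · exact disjoint_sdiff
  · exact (hs.disjoint i j hij).mono (hs.kept_subset i) sdiff_subset

lemma disjoint_kept (hs : EnvyFreeSplit v X T g W) (hij : i ≠ j) : Disjoint (T i) (T j) :=
  (hs.disjoint i j hij).mono (hs.kept_subset i) (hs.kept_subset j)

lemma disjoint_recombine (hs : EnvyFreeSplit v X T g W) (hil : i ≠ l) (hjm : j ≠ m) :
    Disjoint (recombine X T i j) (recombine X T l m) := by
  simp only [recombine, disjoint_union_left, disjoint_union_right]
  exact ⟨⟨hs.disjoint_kept hil, (hs.disjoint_kept_discarded l j).symm⟩,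
    hs.disjoint_kept_discarded i m, (hs.disjoint j m hjm).mono sdiff_subset sdiff_subset⟩

lemma recombine_subset (hs : EnvyFreeSplit v X T g W) (i j : Fin 3) :
    recombine X T i j ⊆ X i ∪ X j :=
  union_subset_union (hs.kept_subset i) sdiff_subset

lemma recombine_subset_goods (hs : EnvyFreeSplit v X T g W) (i j : Fin 3) :
    recombine X T i j ⊆ W :=
  (hs.recombine_subset i j).trans (union_subset (hs.subset i) (hs.subset j))

lemma disjoint_insert_recombine (hs : EnvyFreeSplit v X T g W) (hij : i ≠ j) (k : Fin 3) :
    Disjoint (insert g (T i)) (recombine X T j k) := by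
  rw [disjoint_insert_left]
  refine ⟨fun hg => ?_, disjoint_union_right.2
    ⟨hs.disjoint_kept hij, hs.disjoint_kept_discarded i k⟩⟩
  rcases mem_union.1 (hs.recombine_subset j k hg) with hg | hg
  exacts [hs.notMem j hg, hs.notMem k hg]

lemma val_recombine (hs : EnvyFreeSplit v X T g W) (w : G → ℝ) (i j : Fin 3) :
    val w (recombine X T i j) = val w (T i) + (val w (X j) - val w (T j)) := by
  rw [← show val w (X j \ T j) = val w (X j) - val w (T j) from
    sum_sdiff_eq_sub (hs.kept_subset j)]
  exact sum_union (hs.disjoint_kept_discarded i j)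

lemma tolerable_recombine (hs : EnvyFreeSplit v X T g W)
    (h : val (v k) (recombine X T i j) ≤ val (v k) (X k)) :
    Tolerable (v k) (val (v k) (X k)) (recombine X T i j) :=
  tolerable_of_val_le (fun x hx => hs.nonneg k x (hs.recombine_subset_goods i j hx)) h

lemma tolerable_bundle (hs : EnvyFreeSplit v X T g W) (k j : Fin 3) :
    Tolerable (v k) (val (v k) (X k)) (recombine X T j j) :=
  hs.tolerable_recombine (by rw [hs.recombine_self]; exact hs.envyFree k j)

lemma val_recombine_le_of_lt_swap (hs : EnvyFreeSplit v X T g W)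
    (h : val (v k) (X k) < val (v k) (recombine X T j i)) :
    val (v k) (recombine X T i j) ≤ val (v k) (X k) := by
  have hi := hs.envyFree k i
  have hj := hs.envyFree k j
  rw [hs.val_recombine] at h ⊢
  linarith

lemma val_recombine_le_of_champions (hs : EnvyFreeSplit v X T g W)
    (hkj : Champions v X T g k j) (hki : ¬ Champions v X T g k i) :
    val (v k) (recombine X T i j) ≤ val (v k) (X k) := by
  have hj := hs.envyFree k j
  rw [Champions, hs.val_insert_kept] at hkj hki
  rw [hs.val_recombine]
  linarith

lemma val_recombine_lt_of_champions (hs : EnvyFreeSplit v X T g W)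
    (hkj : Champions v X T g k j) (hki : ¬ Champions v X T g k i) (m : Fin 3) :
    val (v k) (recombine X T i m) < val (v k) (recombine X T j m) := by
  rw [Champions, hs.val_insert_kept] at hkj hki
  rw [hs.val_recombine, hs.val_recombine]
  linarith

lemma val_lt_recombine_of_champions (hs : EnvyFreeSplit v X T g W)
    (hkj : Champions v X T g k j) (hk : ¬ Champions v X T g k k) :
    val (v k) (X k) < val (v k) (recombine X T j k) := by
  simpa only [hs.recombine_self] using hs.val_recombine_lt_of_champions hkj hk k

lemma pos_of_champions (hs : EnvyFreeSplit v X T g W) (hkj : Champions v X T g k j) :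
    0 < v k g := by
  have hj := hs.envyFree k j
  have hT : val (v k) (T j) ≤ val (v k) (X j) :=
    val_mono (fun h hh => hs.nonneg k h (hs.subset j hh)) (hs.kept_subset j)
  rw [Champions, hs.val_insert_kept] at hkj
  linarith

end Recombination

section ChampionCycles

variable {a b c i j k l m : Fin 3}

lemma hasDominatingEFX_of_champions (hs : EnvyFreeSplit v X T g W) {Q R : Finset G}
    (hab : a ≠ b) (hbc : b ≠ c) (hca : c ≠ a) (ha : Champions v X T g a i)
    (hQ : Q ⊆ recombine X T j k) (hR : R ⊆ recombine X T l m)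
    (hij : i ≠ j) (hjl : j ≠ l) (hli : l ≠ i) (hkm : k ≠ m)
    (hb : val (v b) (X b) ≤ val (v b) Q) (hc : val (v c) (X c) ≤ val (v c) R)
    (haQ : Tolerable (v a) (val (v a) (X a)) Q) (haR : Tolerable (v a) (val (v a) (X a)) R)
    (hbR : Tolerable (v b) (val (v b) (X b)) R) (hcQ : Tolerable (v c) (val (v c) (X c)) Q) :
    HasDominatingEFX v X W :=
  hasDominatingEFX_of_bundles hs.nonneg hab hbc hca
    (insert_subset hs.mem ((hs.kept_subset i).trans (hs.subset i)))
    (hQ.trans (hs.recombine_subset_goods j k)) (hR.trans (hs.recombine_subset_goods l m))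
    ((hs.disjoint_insert_recombine hij k).mono_right hQ)
    ((hs.disjoint_recombine hjl hkm).mono hQ hR)
    ((hs.disjoint_insert_recombine hli.symm m).mono_right hR)
    ha hb hc haQ haR (hs.tolerable b i) hbR (hs.tolerable c i) hcQ

lemma hasDominatingEFX_of_self_champion (hs : EnvyFreeSplit v X T g W)
    (ha : Champions v X T g a a) : HasDominatingEFX v X W := by
  obtain ⟨b, hab, -⟩ := exists_fin_three_ne_ne a a
  obtain ⟨c, hbc, hca⟩ := exists_fin_three_ne_ne a b
  exact hs.hasDominatingEFX_of_champions hab hbc hca ha Subset.rfl Subset.rfl hab hbc hca hbc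
    (by rw [hs.recombine_self]) (by rw [hs.recombine_self]) (hs.tolerable_bundle a b)
    (hs.tolerable_bundle a c) (hs.tolerable_bundle b c) (hs.tolerable_bundle c b)

lemma hasDominatingEFX_of_two_cycle_of_le (hs : EnvyFreeSplit v X T g W)
    (hself : ∀ i, ¬ Champions v X T g i i) (hab : a ≠ b) (hbc : b ≠ c) (hca : c ≠ a)
    (h_ab : Champions v X T g a b) (h_ba : Champions v X T g b a)
    (hc : val (v c) (recombine X T b a) ≤ val (v c) (X c)) : HasDominatingEFX v X W :=
  hs.hasDominatingEFX_of_champions hab.symm hca.symm hbc.symm h_ba Subset.rfl Subset.rfl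
    hab hbc hca hca.symm
    (hs.val_lt_recombine_of_champions h_ab (hself a)).le (by rw [hs.recombine_self])
    (hs.tolerable_recombine (hs.val_recombine_le_of_champions h_ba (hself b)))
    (hs.tolerable_bundle b c) (hs.tolerable_bundle a c) (hs.tolerable_recombine hc)

lemma hasDominatingEFX_of_two_cycle (hs : EnvyFreeSplit v X T g W)
    (hself : ∀ i, ¬ Champions v X T g i i) (hab : a ≠ b)
    (h_ab : Champions v X T g a b) (h_ba : Champions v X T g b a) : HasDominatingEFX v X W := by
  obtain ⟨c, hbc, hca⟩ := exists_fin_three_ne_ne a b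
  rcases le_or_gt (val (v c) (recombine X T b a)) (val (v c) (X c)) with hc | hc
  · exact hs.hasDominatingEFX_of_two_cycle_of_le hself hab hbc hca h_ab h_ba hc
  · exact hs.hasDominatingEFX_of_two_cycle_of_le hself hab.symm hca.symm hbc.symm h_ba h_ab
      (hs.val_recombine_le_of_lt_swap hc)

lemma hasDominatingEFX_of_three_cycle_of_le (hs : EnvyFreeSplit v X T g W)
    (hself : ∀ i, ¬ Champions v X T g i i) (hab : a ≠ b) (hbc : b ≠ c) (hca : c ≠ a)
    (h_ab : Champions v X T g a b) (h_bc : Champions v X T g b c) (h_ca : Champions v X T g c a)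
    (h_ac : ¬ Champions v X T g a c) (h_ba : ¬ Champions v X T g b a)
    (hc : val (v c) (recombine X T c b) ≤ val (v c) (X c))
    (ha : val (v a) (recombine X T a c) ≤ val (v a) (X a)) : HasDominatingEFX v X W :=
  hs.hasDominatingEFX_of_champions hab hbc hca h_ab Subset.rfl Subset.rfl hbc hca hab hbc
    (hs.val_lt_recombine_of_champions h_bc (hself b)).le
    (hs.val_lt_recombine_of_champions h_ca (hself c)).le
    (hs.tolerable_recombine (hs.val_recombine_le_of_champions h_ab h_ac))
    (hs.tolerable_recombine ha)
    (hs.tolerable_recombine (hs.val_recombine_le_of_champions h_bc h_ba))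
    (hs.tolerable_recombine hc)

-- A minimal part `E` of `recombine X T b c` preferred by some agent goes to `a` or to `c`: agent
-- `b` does not even prefer the whole of it.
lemma hasDominatingEFX_of_three_cycle_of_lt (hs : EnvyFreeSplit v X T g W)
    (hself : ∀ i, ¬ Champions v X T g i i) (hab : a ≠ b) (hbc : b ≠ c) (hca : c ≠ a)
    (h_ab : Champions v X T g a b) (h_bc : Champions v X T g b c) (h_ca : Champions v X T g c a)
    (ha : val (v a) (X a) < val (v a) (recombine X T a c))
    (hb : val (v b) (X b) < val (v b) (recombine X T b a)) : HasDominatingEFX v X W := by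
  obtain ⟨E, hE, hEtol, hpref⟩ :=
    exists_tolerable_subset v (fun i => val (v i) (X i)) (recombine X T b c)
  have ha_whole : val (v a) (X a) < val (v a) (recombine X T b c) :=
    ha.trans (hs.val_recombine_lt_of_champions h_ab (hself a) c)
  have hb_whole : val (v b) E ≤ val (v b) (X b) :=
    (val_mono (fun x hx => hs.nonneg b x (hs.recombine_subset_goods b c hx)) hE).trans
      (hs.val_recombine_le_of_champions h_bc (hself b))
  obtain ⟨k, hk⟩ : ∃ k, val (v k) (X k) < val (v k) E := by
    rcases hpref with rfl | hpref
    exacts [⟨a, ha_whole⟩, hpref]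
  obtain rfl | rfl | rfl : k = a ∨ k = b ∨ k = c := by lia
  · exact hs.hasDominatingEFX_of_champions hca hab hbc h_ca hE Subset.rfl hab hbc hca hca hk.le
      (hb.trans (hs.val_recombine_lt_of_champions h_bc (hself b) _)).le (hEtol c)
      (hs.tolerable_recombine (hs.val_recombine_le_of_champions h_ca (hself c)))
      (hs.tolerable_recombine (hs.val_recombine_le_of_lt_swap ha)) (hEtol b)
  · exact absurd hk hb_whole.not_gt
  · exact hs.hasDominatingEFX_of_champions hbc hca hab h_bc hE Subset.rfl hbc.symm hab.symm
      hca.symm hca hk.le (by rw [hs.recombine_self]) (hEtol b) (hs.tolerable_bundle b a)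
      (hs.tolerable_bundle k a) (hEtol a)

lemma hasDominatingEFX_of_three_cycle (hs : EnvyFreeSplit v X T g W)
    (hself : ∀ i, ¬ Champions v X T g i i) (hab : a ≠ b) (hbc : b ≠ c) (hca : c ≠ a)
    (h_ab : Champions v X T g a b) (h_bc : Champions v X T g b c) (h_ca : Champions v X T g c a) :
    HasDominatingEFX v X W := by
  by_cases h_ba : Champions v X T g b a
  · exact hs.hasDominatingEFX_of_two_cycle hself hab h_ab h_ba
  by_cases h_cb : Champions v X T g c b
  · exact hs.hasDominatingEFX_of_two_cycle hself hbc h_bc h_cb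
  by_cases h_ac : Champions v X T g a c
  · exact hs.hasDominatingEFX_of_two_cycle hself hca h_ca h_ac
  have le_case {a b c : Fin 3} := hs.hasDominatingEFX_of_three_cycle_of_le hself (a := a) (b := b)
    (c := c)
  have lt_case {a b c : Fin 3} := hs.hasDominatingEFX_of_three_cycle_of_lt hself (a := a) (b := b)
    (c := c)
  rcases le_or_gt (val (v a) (recombine X T a c)) (val (v a) (X a)) with ha | ha <;>
  rcases le_or_gt (val (v b) (recombine X T b a)) (val (v b) (X b)) with hb | hb
  · exact le_case hbc hca hab h_bc h_ca h_ab h_ba h_cb ha hb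
  · rcases le_or_gt (val (v c) (recombine X T c b)) (val (v c) (X c)) with hc | hc
    · exact le_case hab hbc hca h_ab h_bc h_ca h_ac h_ba hc ha
    · exact lt_case hbc hca hab h_bc h_ca h_ab hb hc
  · rcases le_or_gt (val (v c) (recombine X T c b)) (val (v c) (X c)) with hc | hc
    · exact le_case hca hab hbc h_ca h_ab h_bc h_cb h_ac hb hc
    · exact lt_case hca hab hbc h_ca h_ab h_bc hc ha
  · exact lt_case hab hbc hca h_ab h_bc h_ca ha hb

lemma hasDominatingEFX (hs : EnvyFreeSplit v X T g W) (hpos : ∃ i, 0 < v i g)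
    (hch : ∀ j, 0 < v j g → ∃ k, Champions v X T g k j) : HasDominatingEFX v X W := by
  by_cases hself : ∃ i, Champions v X T g i i
  · exact hs.hasDominatingEFX_of_self_champion hself.choose_spec
  rw [not_exists] at hself
  have hne {k j : Fin 3} (h : Champions v X T g k j) : k ≠ j := by
    rintro rfl
    exact hself k h
  obtain ⟨a, ha⟩ := hpos
  obtain ⟨b, h_ba⟩ := hch a ha
  obtain ⟨c, h_cb⟩ := hch b (hs.pos_of_champions h_ba)
  obtain rfl | hca := eq_or_ne c a
  · exact hs.hasDominatingEFX_of_two_cycle hself (hne h_cb) h_cb h_ba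
  obtain ⟨d, h_dc⟩ := hch c (hs.pos_of_champions h_cb)
  have hdc := hne h_dc
  obtain rfl | rfl : d = a ∨ d = b := by have := hne h_ba; have := hne h_cb; lia
  · exact hs.hasDominatingEFX_of_three_cycle hself hca.symm (hne h_cb) (hne h_ba) h_dc h_cb h_ba
  · exact hs.hasDominatingEFX_of_two_cycle hself hdc h_dc h_cb

end ChampionCycles

end EnvyFreeSplit

lemma exists_envyFreeSplit (hv : ∀ i, ∀ h ∈ W, 0 ≤ v i h) (hXW : ∀ i, X i ⊆ W)
    (hdisj : ∀ i j, i ≠ j → Disjoint (X i) (X j))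
    (hEF : ∀ i j, val (v i) (X j) ≤ val (v i) (X i)) (hgW : g ∈ W) (hgX : ∀ i, g ∉ X i) :
    ∃ T, EnvyFreeSplit v X T g W ∧ ∀ j, 0 < v j g → ∃ k, Champions v X T g k j := by
  choose T hTX htol hch using fun j =>
    exists_kept_part (fun i h hh => hv i h (hXW j hh)) (hEF · j) (hgX j)
  exact ⟨T, ⟨hv, hXW, hdisj, hEF, hgW, hgX, hTX, fun i j => htol j i⟩, hch⟩

end DominatingAllocations

theorem three_sources_dominating_efx_general {G : Type*} [DecidableEq G] (M : Finset G)
    (v : Fin 3 → G → ℝ) (hv : ∀ i : Fin 3, ∀ g ∈ M, 0 ≤ v i g)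
    (X : Fin 3 → Finset G) (hXM : ∀ i, X i ⊆ M)
    (hdisj : ∀ i j, i ≠ j → Disjoint (X i) (X j))
    (hEF : ∀ i j : Fin 3, val (v i) (X j) ≤ val (v i) (X i))
    (g : G) (hg : g ∈ M) (hun : g ∉ X 0 ∪ X 1 ∪ X 2) (hpos : ∃ i, 0 < v i g) :
    ∃ Y : Fin 3 → Finset G,
      (∀ i, Y i ⊆ M) ∧
      (∀ i j, i ≠ j → Disjoint (Y i) (Y j)) ∧
      Y 0 ∪ Y 1 ∪ Y 2 ⊆ X 0 ∪ X 1 ∪ X 2 ∪ {g} ∧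
      EFX v Y ∧
      (∀ i, val (v i) (X i) ≤ val (v i) (Y i)) ∧
      (∃ i, val (v i) (X i) < val (v i) (Y i)) := by
  have hWM : X 0 ∪ X 1 ∪ X 2 ∪ {g} ⊆ M :=
    union_subset (union_subset (union_subset (hXM 0) (hXM 1)) (hXM 2)) (singleton_subset_iff.2 hg)
  have hXW (i : Fin 3) : X i ⊆ X 0 ∪ X 1 ∪ X 2 ∪ {g} := by
    intro x hx
    fin_cases i <;> simp_all
  have hgX (i : Fin 3) : g ∉ X i := by fin_cases i <;> simp_all
  obtain ⟨T, hs, hch⟩ := exists_envyFreeSplit (fun i h hh => hv i h (hWM hh)) hXW hdisj hEF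
    (by simp) hgX
  obtain ⟨Y, hYW, hY, hYE, hle, hlt⟩ := hs.hasDominatingEFX hpos hch
  exact ⟨Y, fun i => (hYW i).trans hWM, hY,
    union_subset (union_subset (hYW 0) (hYW 1)) (hYW 2), hYE, hle, hlt⟩

/-- Lemma 9 (three sources): in a non-degenerate instance, if the partial EFX allocation `X`
is envy-free and `g` is unallocated, then there is a Pareto dominating partial EFX
allocation using only the goods of `X` plus `g`. -/
theorem three_sources_dominating_efx {G : Type*} [DecidableEq G] (M : Finset G)
    (v : Fin 3 → G → ℝ) (hv : ∀ i : Fin 3, ∀ g ∈ M, 0 ≤ v i g)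
    (hnd : ∀ i : Fin 3, ∀ S ⊆ M, ∀ T ⊆ M, S ≠ T → val (v i) S ≠ val (v i) T)
    (X : Fin 3 → Finset G) (hXM : ∀ i, X i ⊆ M)
    (hdisj : ∀ i j, i ≠ j → Disjoint (X i) (X j))
    (hEFX : EFX v X)
    (hEF : ∀ i j : Fin 3, val (v i) (X j) ≤ val (v i) (X i))
    (g : G) (hg : g ∈ M) (hun : g ∉ X 0 ∪ X 1 ∪ X 2) :
    ∃ Y : Fin 3 → Finset G,
      (∀ i, Y i ⊆ M) ∧
      (∀ i j, i ≠ j → Disjoint (Y i) (Y j)) ∧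
      Y 0 ∪ Y 1 ∪ Y 2 ⊆ X 0 ∪ X 1 ∪ X 2 ∪ {g} ∧
      EFX v Y ∧
      (∀ i, val (v i) (X i) ≤ val (v i) (Y i)) ∧
      (∃ i, val (v i) (X i) < val (v i) (Y i)) := by
  have hne : v 0 g ≠ 0 := by
    simpa [_root_.val] using hnd 0 {g} (by simpa) ∅ (by simp) (by simp)
  exact three_sources_dominating_efx_general M v hv X hXM hdisj hEF g hg hun
    ⟨0, (hv 0 g hg).lt_of_ne' hne⟩
end

section
/- In a non-degenerate instance, let X be a partial EFX allocation and g an unallocated good, and suppose the envy graph E_X is acyclic and has exactly two sources. Then for every ordering (a, b, c) of the three agents there exists a partial EFX allocation Y with Y_1 ∪ Y_2 ∪ Y_3 ⊆ X_1 ∪ X_2 ∪ X_3 ∪ {g} such that the triple (v_a(Y_a), v_b(Y_b), v_c(Y_c)) is lexicographically strictly greater than (v_a(X_a), v_b(X_b), v_c(X_c)). -/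
open Finset

/-!
Let `p` and `q` be the two sources and `r` the third agent, whom one of the sources, say `p`, must
envy. Trimming `X p ∪ {g}` and `X q ∪ {g}` until nobody strongly envies them leaves sets `S` and `T`
that contain `g` and are still envied by somebody. When `p` envies `S`, `q` envies `T`, or handing
out `S` or `T` closes a cycle of envy, rotating bundles is a Pareto improvement. Otherwise `q`
envies `S`. The recombined bundles `(S \ {g}) ∪ (X q \ T)` and `(T \ {g}) ∪ (X p \ S)` partition
`X p ∪ X q`. If `p` envies `T`, then `r`, who envies neither source, does not envy one of them, and
giving it away together with `S` or `T` is a Pareto improvement.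

Otherwise `r` envies `T`. If `p` likes `X r` at least as much as `(S \ {g}) ∪ (X q \ T)`, then `p`
can take `X r`, `q` that bundle, and `r` the set `T`. If not, the agent who comes first in the
lexicographic order can be made better off by cut and choose: two disjoint bundles are acceptable to
one agent, part of the remaining goods, trimmed so that it is not strongly envied, goes to another
one, and the last agent picks the better of the two bundles.
-/

section Valuation

variable {G : Type*} {u : G → ℝ} {S T : Finset G}

theorem val_mono_s14 (hu : 0 ≤ u) : Monotone (val u) :=
  fun _ _ hST => sum_le_sum_of_subset_of_nonneg hST fun h _ _ => hu h

theorem val_strictMono (hu : ∀ h, 0 < u h) : StrictMono (val u) := by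
  intro S T hST
  obtain ⟨h, hT, hS⟩ := exists_of_ssubset hST
  exact sum_lt_sum_of_subset hST.subset hT hS (hu h) fun k _ _ => (hu k).le

theorem pos_of_val_injOn {M : Finset G} (hu : ∀ h ∈ M, 0 ≤ u h)
    (hinj : ∀ S ⊆ M, ∀ T ⊆ M, S ≠ T → val u S ≠ val u T) : ∀ h ∈ M, 0 < u h := by
  intro h hh
  refine (hu h hh).lt_of_ne' ?_
  simpa [_root_.val] using
    hinj {h} (singleton_subset_iff.2 hh) ∅ (empty_subset M) (singleton_ne_empty h)

theorem val_map {H : Type*} (e : H ↪ G) (S : Finset H) : val u (S.map e) = val (u ∘ e) S :=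
  sum_map S e u

variable [DecidableEq G]

/-- The bundle `S` with its good `g` traded for the goods of `B` outside `T`. For sources `p` and
`q` with trimmed sets `S ⊆ X p ∪ {g}` and `T ⊆ X q ∪ {g}`, and for `B = X q`, it joins the part
of `X p` kept in `S` to the part of `X q` discarded from `T`. -/
def exchange (g : G) (S T B : Finset G) : Finset G :=
  S.erase g ∪ (B \ T)

theorem val_exchange_add_val {g : G} {B : Finset G} (hgS : g ∈ S) (hgT : g ∈ T) (hgB : g ∉ B)
    (hTB : T ⊆ insert g B) (hSB : Disjoint (S.erase g) B) :
    val u (exchange g S T B) + val u T = val u S + val u B := by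
  have hunion : val u (exchange g S T B) = val u (S.erase g) + val u (B \ T) :=
    sum_union (hSB.mono_right sdiff_subset)
  have hlower : val u (B \ T) + val u (T.erase g) = val u B := by
    have hBT : B \ T = B \ T.erase g := by grind
    rw [hBT]
    exact sum_sdiff (subset_insert_iff.1 hTB)
  have hS : val u (S.erase g) + u g = val u S := sum_erase_add S u hgS
  have hT : val u (T.erase g) + u g = val u T := sum_erase_add T u hgT
  linarith

/-- An agent with valuation `u` whose own bundle is worth `t` does not strongly envy `S`. -/
def NoStrongEnvy (u : G → ℝ) (t : ℝ) (S : Finset G) : Prop :=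
  ∀ h ∈ S, val u (S \ {h}) ≤ t

theorem NoStrongEnvy.mono {s t : ℝ} (h : NoStrongEnvy u s S) (hst : s ≤ t) :
    NoStrongEnvy u t S :=
  fun x hx => (h x hx).trans hst

theorem NoStrongEnvy.of_le (hu : 0 ≤ u) {t : ℝ} (h : val u S ≤ t) : NoStrongEnvy u t S :=
  fun _ _ => (val_mono_s14 hu sdiff_subset).trans h

theorem exists_subset_forall_noStrongEnvy {ι : Type*} (u : ι → G → ℝ) (t : ι → ℝ)
    (S : Finset G) :
    ∃ Z ⊆ S, (∀ i, NoStrongEnvy (u i) (t i) Z) ∧ (Z = S ∨ ∃ i, t i < val (u i) Z) := by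
  by_cases hS : ∀ i, NoStrongEnvy (u i) (t i) S
  · exact ⟨S, Subset.rfl, hS, .inl rfl⟩
  simp only [NoStrongEnvy, not_forall, not_le] at hS
  obtain ⟨i, x, -, hi⟩ := hS
  obtain ⟨Z, hZ, hmin⟩ := exists_minimal_le_of_wellFoundedLT
    (fun Z => ∃ i, t i < val (u i) Z) (S \ {x}) ⟨i, hi⟩
  refine ⟨Z, hZ.trans sdiff_subset, fun j h hh => ?_, .inr hmin.prop⟩
  have hlt : Z \ {h} < Z := sdiff_ssubset (singleton_subset_iff.2 hh) (singleton_nonempty h)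
  exact not_lt.1 fun hj => hmin.not_prop_of_lt hlt ⟨j, hj⟩

/-- In the terminology of the EFX literature, the bundle `P` is EFX-feasible for an agent with
valuation `u` when the other two agents hold `Q` and `R`. -/
def EFXFeasible (u : G → ℝ) (P Q R : Finset G) : Prop :=
  NoStrongEnvy u (val u P) Q ∧ NoStrongEnvy u (val u P) R

theorem EFXFeasible.of_le {P Q R : Finset G} (hu : 0 ≤ u) (hQ : val u Q ≤ val u P)
    (hR : val u R ≤ val u P) : EFXFeasible u P Q R :=
  ⟨.of_le hu hQ, .of_le hu hR⟩

end Valuation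

section Allocation

variable {G : Type*} [DecidableEq G] {v : Fin 3 → G → ℝ} {p q r : Fin 3}

theorem eq_or_eq_or_eq_of_nodup (hpqr : [p, q, r].Nodup) (i : Fin 3) :
    i = p ∨ i = q ∨ i = r := by
  decide +revert

theorem forall_agent_iff (hpqr : [p, q, r].Nodup) {φ : Fin 3 → Prop} :
    (∀ i, φ i) ↔ φ p ∧ φ q ∧ φ r := by
  refine ⟨fun h => ⟨h p, h q, h r⟩, fun ⟨hp, hq, hr⟩ i => ?_⟩
  rcases eq_or_eq_or_eq_of_nodup hpqr i with rfl | rfl | rfl <;> assumption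

theorem exists_agent_iff (hpqr : [p, q, r].Nodup) {φ : Fin 3 → Prop} :
    (∃ i, φ i) ↔ φ p ∨ φ q ∨ φ r := by
  simpa only [not_forall, not_and_or, not_not] using
    not_congr (forall_agent_iff hpqr (φ := fun i => ¬ φ i))

/-- A partial EFX allocation. -/
structure IsEFXAllocation_s14 (v : Fin 3 → G → ℝ) (Y : Fin 3 → Finset G) : Prop where
  disjoint : Pairwise (Function.onFun Disjoint Y)
  efx : EFX v Y

theorem IsEFXAllocation_s14.noStrongEnvy {Y : Fin 3 → Finset G} (hY : IsEFXAllocation_s14 v Y)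
    (j i : Fin 3) : NoStrongEnvy (v i) (val (v i) (Y i)) (Y j) :=
  hY.efx i j

theorem isEFXAllocation_map_iff {H : Type*} [DecidableEq H] (e : H ↪ G)
    {Y : Fin 3 → Finset H} :
    IsEFXAllocation_s14 v (fun i => (Y i).map e) ↔ IsEFXAllocation_s14 (fun i => v i ∘ e) Y := by
  have hefx : EFX v (fun i => (Y i).map e) ↔ EFX (fun i => v i ∘ e) Y := by
    simp only [EFX, forall_mem_map, ← map_singleton, ← Finset.map_sdiff, val_map]
  refine ⟨fun h => ⟨fun i j hij => ?_, hefx.1 h.efx⟩, fun h => ⟨fun i j hij => ?_, hefx.2 h.efx⟩⟩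
  · exact (disjoint_map e).1 (h.disjoint hij)
  · exact (disjoint_map e).2 (h.disjoint hij)

theorem exists_isEFXAllocation (hv : 0 ≤ v) (hpqr : [p, q, r].Nodup) {P Q R : Finset G}
    (hdisj : [P, Q, R].Pairwise Disjoint) (hp : EFXFeasible (v p) P Q R)
    (hq : EFXFeasible (v q) Q P R) (hr : EFXFeasible (v r) R P Q) :
    ∃ Y, IsEFXAllocation_s14 v Y ∧ Y p = P ∧ Y q = Q ∧ Y r = R := by
  obtain ⟨Y, rfl, rfl, rfl⟩ : ∃ Y : Fin 3 → Finset G, Y p = P ∧ Y q = Q ∧ Y r = R :=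
    ⟨fun i => if i = p then P else if i = q then Q else R, by grind⟩
  have hself : ∀ i, NoStrongEnvy (v i) (val (v i) (Y i)) (Y i) := fun i => .of_le (hv i) le_rfl
  refine ⟨Y, ⟨?_, ?_⟩, rfl, rfl, rfl⟩
  · simp only [Pairwise, Function.onFun, forall_agent_iff hpqr]
    grind
  · change ∀ i j, NoStrongEnvy (v i) (val (v i) (Y i)) (Y j)
    simp only [forall_agent_iff hpqr]
    exact ⟨⟨hself p, hp⟩, ⟨hq.1, hself q, hq.2⟩, hr.1, hr.2, hself r⟩

theorem exists_isEFXAllocation_of_choice (hv : 0 ≤ v) (hpqr : [p, q, r].Nodup)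
    {Z T W : Finset G} (hdisj : [Z, T, W].Pairwise Disjoint) (hp : EFXFeasible (v p) Z T W)
    (hq : NoStrongEnvy (v q) (max (val (v q) T) (val (v q) W)) Z)
    (hrT : EFXFeasible (v r) T Z W) (hrW : EFXFeasible (v r) W Z T) :
    ∃ Y, IsEFXAllocation_s14 v Y ∧ Y p = Z ∧ max (val (v q) T) (val (v q) W) ≤ val (v q) (Y q) ∧
      (Y r = T ∨ Y r = W) := by
  rcases le_total (val (v q) W) (val (v q) T) with h | h
  · rw [max_eq_left h] at hq ⊢
    obtain ⟨Y, hY, hYp, hYq, hYr⟩ :=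
      exists_isEFXAllocation hv hpqr hdisj hp ⟨hq, .of_le (hv q) h⟩ hrW
    exact ⟨Y, hY, hYp, hYq ▸ le_rfl, .inr hYr⟩
  · rw [max_eq_right h] at hq ⊢
    obtain ⟨Y, hY, hYp, hYq, hYr⟩ :=
      exists_isEFXAllocation hv hpqr (by grind) ⟨hp.2, hp.1⟩
        ⟨hq, .of_le (hv q) h⟩ hrT
    exact ⟨Y, hY, hYp, hYq ▸ le_rfl, .inl hYr⟩

-- A piece `Z` of `C` that neither `p` nor `q` strongly envies goes to one of them; the other one
-- picks the better of `T` and `W`, and `r` is content with the one that is left.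
theorem exists_isEFXAllocation_of_two_acceptable (hv : 0 ≤ v) (hpqr : [p, q, r].Nodup)
    {T W C : Finset G} (hdisj : [T, W, C].Pairwise Disjoint)
    (hp : max (val (v p) T) (val (v p) W) ≤ val (v p) C)
    (hrT : val (v r) C ≤ val (v r) T) (hrW : val (v r) C ≤ val (v r) W)
    (hTW : NoStrongEnvy (v r) (val (v r) T) W) (hWT : NoStrongEnvy (v r) (val (v r) W) T) :
    ∃ Y, IsEFXAllocation_s14 v Y ∧ max (val (v p) T) (val (v p) W) ≤ val (v p) (Y p) ∧
      (Y r = T ∨ Y r = W) := by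
  obtain ⟨Z, hZC, htol, hZ⟩ := exists_subset_forall_noStrongEnvy ![v p, v q]
    ![max (val (v p) T) (val (v p) W), max (val (v q) T) (val (v q) W)] C
  simp only [Fin.forall_fin_two, Fin.exists_fin_two, Matrix.cons_val_zero,
    Matrix.cons_val_one] at htol hZ
  have hdisjZ : [Z, T, W].Pairwise Disjoint := by grind [Disjoint.mono_left]
  have hrZ : val (v r) Z ≤ val (v r) C := val_mono_s14 (hv r) hZC
  have hTfeas : EFXFeasible (v r) T Z W := ⟨.of_le (hv r) (hrZ.trans hrT), hTW⟩
  have hWfeas : EFXFeasible (v r) W Z T := ⟨.of_le (hv r) (hrZ.trans hrW), hWT⟩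
  have hbest : max (val (v p) T) (val (v p) W) ≤ val (v p) Z ∨
      max (val (v q) T) (val (v q) W) ≤ val (v q) Z := by
    rcases hZ with rfl | hpZ | hqZ
    exacts [.inl hp, .inl hpZ.le, .inr hqZ.le]
  rcases hbest with hpZ | hqZ
  · obtain ⟨Y, hY, hYp, -, hYr⟩ := exists_isEFXAllocation_of_choice hv hpqr hdisjZ
      (.of_le (hv p) (le_of_max_le_left hpZ) (le_of_max_le_right hpZ)) htol.2 hTfeas hWfeas
    exact ⟨Y, hY, hYp ▸ hpZ, hYr⟩
  · obtain ⟨Y, hY, -, hYp, hYr⟩ := exists_isEFXAllocation_of_choice hv (by grind) hdisjZ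
      (.of_le (hv q) (le_of_max_le_left hqZ) (le_of_max_le_right hqZ)) htol.1 hTfeas hWfeas
    exact ⟨Y, hY, hYp, hYr⟩

theorem exists_isEFXAllocation_lt_of_reserve (hv : 0 ≤ v) (hpqr : [p, q, r].Nodup)
    {T E C : Finset G} {s : ℝ} (hdisj : [T, E, C].Pairwise Disjoint)
    (hpT : val (v p) T ≤ val (v p) C) (hqT : val (v q) T ≤ val (v q) C)
    (hrC : val (v r) C ≤ s) (hrT : s < val (v r) T) (hrE : s < val (v r) E)
    (htol : NoStrongEnvy (v r) s T) :
    ∃ Y, IsEFXAllocation_s14 v Y ∧ s < val (v r) (Y r) := by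
  obtain ⟨W, hWE, hW, hmin⟩ := exists_subset_forall_noStrongEnvy ![v p, v q, v r]
    ![val (v p) C, val (v q) C, val (v r) T] E
  simp only [Fin.forall_fin_succ, Fin.exists_fin_succ, Matrix.cons_val_zero,
    Matrix.cons_val_succ, IsEmpty.forall_iff, IsEmpty.exists_iff, and_true, or_false] at hW hmin
  obtain ⟨hpW, hqW, hrW⟩ := hW
  have hdisjW : [W, C, T].Pairwise Disjoint := by grind [Disjoint.mono_left]
  have hCT : val (v r) C ≤ val (v r) T := hrC.trans hrT.le
  rcases lt_or_ge (val (v p) C) (val (v p) W) with hp | hp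
  · obtain ⟨Y, hY, -, -, hYr⟩ := exists_isEFXAllocation hv hpqr hdisjW
      (.of_le (hv p) hp.le (hpT.trans hp.le)) ⟨hqW, .of_le (hv q) hqT⟩ ⟨hrW, .of_le (hv r) hCT⟩
    exact ⟨Y, hY, hYr ▸ hrT⟩
  rcases lt_or_ge (val (v q) C) (val (v q) W) with hq | hq
  · obtain ⟨Y, hY, -, -, hYr⟩ := exists_isEFXAllocation hv (p := q) (q := p) (by grind) hdisjW
      (.of_le (hv q) hq.le (hqT.trans hq.le)) ⟨hpW, .of_le (hv p) hpT⟩ ⟨hrW, .of_le (hv r) hCT⟩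
    exact ⟨Y, hY, hYr ▸ hrT⟩
  have hsW : s < val (v r) W := by
    rcases hmin with rfl | h | h | h
    exacts [hrE, absurd h hp.not_gt, absurd h hq.not_gt, hrT.trans h]
  obtain ⟨Y, hY, -, hYr⟩ := exists_isEFXAllocation_of_two_acceptable hv hpqr
    (T := T) (W := W) (by grind) (max_le hpT hp) hCT (hrC.trans hsW.le) hrW (htol.mono hsW.le)
  rcases hYr with hYr | hYr
  exacts [⟨Y, hY, hYr ▸ hrT⟩, ⟨Y, hY, hYr ▸ hsW⟩]

end Allocation

section Profile

variable {G : Type*} {v : Fin 3 → G → ℝ} {X Y : Fin 3 → Finset G} {p q r : Fin 3}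

/-- The utility profile of an allocation. Its pointwise order `<` is Pareto domination. -/
noncomputable abbrev utility (v : Fin 3 → G → ℝ) (X : Fin 3 → Finset G) : Fin 3 → ℝ :=
  fun i => val (v i) (X i)

theorem utility_map {H : Type*} (e : H ↪ G) (X : Fin 3 → Finset H) :
    utility v (fun i => (X i).map e) = utility (fun i => v i ∘ e) X :=
  funext fun i => val_map e (X i)

theorem lex_of_lt_or_lt {f h : Fin 3 → ℝ} {a b c : Fin 3} (habc : [a, b, c].Nodup)
    (hlt : f < h ∨ f a < h a) :
    f a < h a ∨ h a = f a ∧ (f b < h b ∨ h b = f b ∧ f c < h c) := by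
  rcases hlt with hlt | hlt
  · simp only [lt_iff_le_not_ge, Pi.le_def, forall_agent_iff habc] at hlt ⊢
    grind
  · exact .inl hlt

theorem utility_lt_utility (hpqr : [p, q, r].Nodup)
    (hp : val (v p) (X p) < val (v p) (Y p)) (hq : val (v q) (X q) ≤ val (v q) (Y q))
    (hr : val (v r) (X r) ≤ val (v r) (Y r)) : utility v X < utility v Y :=
  Pi.lt_def.2 ⟨(forall_agent_iff hpqr).2 ⟨hp.le, hq, hr⟩, p, hp⟩

end Profile

section Improvement

variable {G : Type*} [DecidableEq G] {v : Fin 3 → G → ℝ} {X : Fin 3 → Finset G}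
  {p q r : Fin 3} {g : G} {S T : Finset G}

/-- Some partial EFX allocation Pareto dominates `X` or makes agent `a` better off. In either case
it is lexicographically larger than `X` for every ordering of the agents that begins with `a`. -/
def Improvable (v : Fin 3 → G → ℝ) (X : Fin 3 → Finset G) (a : Fin 3) : Prop :=
  ∃ Y, IsEFXAllocation_s14 v Y ∧ (utility v X < utility v Y ∨ utility v X a < utility v Y a)

theorem improvable_of_reassign (hv : 0 ≤ v) (hpqr : [p, q, r].Nodup) {P Q R : Finset G}
    (hdisj : [P, Q, R].Pairwise Disjoint)
    (hP : ∀ i, NoStrongEnvy (v i) (val (v i) (X i)) P)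
    (hQ : ∀ i, NoStrongEnvy (v i) (val (v i) (X i)) Q)
    (hR : ∀ i, NoStrongEnvy (v i) (val (v i) (X i)) R)
    (hp : val (v p) (X p) < val (v p) P) (hq : val (v q) (X q) ≤ val (v q) Q)
    (hr : val (v r) (X r) ≤ val (v r) R) (a : Fin 3) :
    Improvable v X a := by
  obtain ⟨Y, hY, rfl, rfl, rfl⟩ := exists_isEFXAllocation hv hpqr hdisj
    ⟨(hQ p).mono hp.le, (hR p).mono hp.le⟩ ⟨(hP q).mono hq, (hR q).mono hq⟩
    ⟨(hP r).mono hr, (hQ r).mono hr⟩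
  exact ⟨Y, hY, .inl (utility_lt_utility hpqr hp hq hr)⟩

/-- The set `S ⊆ X p ∪ {g}` obtained from a source `p` and an unallocated good `g` by discarding
goods of `X p ∪ {g}` until nobody strongly envies it. -/
structure TrimmedSource (v : Fin 3 → G → ℝ) (X : Fin 3 → Finset G) (g : G) (p : Fin 3)
    (S : Finset G) : Prop where
  source : ∀ i, val (v i) (X p) ≤ val (v i) (X i)
  mem : g ∈ S
  subset : S ⊆ insert g (X p)
  noStrongEnvy : ∀ i, NoStrongEnvy (v i) (val (v i) (X i)) S

theorem exists_trimmedSource (hv : ∀ i h, 0 < v i h) (hg : g ∉ X p)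
    (hsource : ∀ i, val (v i) (X p) ≤ val (v i) (X i)) :
    ∃ S, TrimmedSource v X g p S ∧ ∃ i, val (v i) (X i) < val (v i) S := by
  obtain ⟨S, hS, htol, hmin⟩ :=
    exists_subset_forall_noStrongEnvy v (utility v X) (insert g (X p))
  have henvy : ∃ i, val (v i) (X i) < val (v i) S := by
    rcases hmin with rfl | henvy
    exacts [⟨p, val_strictMono (hv p) (ssubset_insert hg)⟩, henvy]
  obtain ⟨i, hi⟩ := henvy
  have hgS : g ∈ S := by
    by_contra hgS
    have hSX : S ⊆ X p := (subset_insert_iff_of_notMem hgS).1 hS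
    exact hi.not_ge ((val_mono_s14 (fun h => (hv i h).le) hSX).trans (hsource i))
  exact ⟨S, ⟨hsource, hgS, hS, htol⟩, i, hi⟩

/-- Two sources `p` and `q` of a partial EFX allocation `X`, the third agent `r`, and an unallocated
good `g`, with the trimmed sets `S ⊆ X p ∪ {g}` and `T ⊆ X q ∪ {g}`, when every agent values every
good positively. -/
structure SourcePair (v : Fin 3 → G → ℝ) (X : Fin 3 → Finset G) (p q r : Fin 3) (g : G)
    (S T : Finset G) : Prop where
  pos : ∀ i h, 0 < v i h
  nodup : [p, q, r].Nodup
  alloc : IsEFXAllocation_s14 v X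
  notMem : ∀ i, g ∉ X i
  left : TrimmedSource v X g p S
  right : TrimmedSource v X g q T

namespace SourcePair

variable (H : SourcePair v X p q r g S T)

include H

theorem symm : SourcePair v X q p r g T S :=
  ⟨H.pos, by grind [H.nodup], H.alloc, H.notMem, H.right, H.left⟩

theorem nonneg : 0 ≤ v :=
  fun i h => (H.pos i h).le

theorem pairwise_disjoint : [X p, X q, X r].Pairwise Disjoint :=
  List.Pairwise.map X (fun _ _ hab => H.alloc.disjoint hab) H.nodup

theorem pairwise_disjoint_trimmed : [S, X q, X r].Pairwise Disjoint := by
  grind [H.pairwise_disjoint, H.notMem q, H.notMem r, H.left.subset, Finset.disjoint_left]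

theorem pairwise_disjoint_exchange :
    [exchange g S T (X q), T, X r].Pairwise Disjoint := by
  grind [exchange, H.pairwise_disjoint_trimmed, H.symm.pairwise_disjoint_trimmed, H.left.subset,
    Finset.disjoint_left]

theorem val_exchange_add_val (i : Fin 3) :
    val (v i) (exchange g S T (X q)) + val (v i) T = val (v i) S + val (v i) (X q) := by
  have hSq : Disjoint (S.erase g) (X q) :=
    (List.rel_of_pairwise_cons H.pairwise_disjoint_trimmed (by simp)).mono_left (erase_subset g S)
  exact _root_.val_exchange_add_val H.left.mem H.right.mem (H.notMem q) H.right.subset hSq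

theorem improvable_of_self_envy (hS : val (v p) (X p) < val (v p) S) (a : Fin 3) :
    Improvable v X a :=
  improvable_of_reassign H.nonneg H.nodup H.pairwise_disjoint_trimmed H.left.noStrongEnvy
    (H.alloc.noStrongEnvy q) (H.alloc.noStrongEnvy r) hS le_rfl le_rfl a

theorem improvable_of_envy_cycle (hp : val (v p) (X p) < val (v p) (X r))
    (hr : val (v r) (X r) < val (v r) S) (a : Fin 3) : Improvable v X a :=
  improvable_of_reassign H.nonneg H.nodup (by grind [H.pairwise_disjoint_trimmed])
    (H.alloc.noStrongEnvy r) (H.alloc.noStrongEnvy q) H.left.noStrongEnvy hp le_rfl hr.le a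

theorem improvable_of_exchange (hpS : val (v p) S ≤ val (v p) (X p))
    (hpT : val (v p) (X p) < val (v p) T) (hqT : val (v q) T ≤ val (v q) (X q))
    (hqS : val (v q) (X q) < val (v q) S)
    (hr : val (v r) (exchange g T S (X p)) ≤ val (v r) (X r)) (a : Fin 3) :
    Improvable v X a := by
  have hp : val (v p) (X p) < val (v p) (exchange g T S (X p)) := by
    linarith [H.symm.val_exchange_add_val p]
  have hq : val (v q) (exchange g T S (X p)) ≤ val (v q) S := by
    linarith [H.symm.val_exchange_add_val q, H.left.source q]
  obtain ⟨Y, hY, hYp, hYq, hYr⟩ := exists_isEFXAllocation H.nonneg H.nodup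
    H.symm.pairwise_disjoint_exchange
    ⟨(H.left.noStrongEnvy p).mono hp.le, (H.alloc.noStrongEnvy r p).mono hp.le⟩
    ⟨.of_le (H.nonneg q) hq, (H.alloc.noStrongEnvy r q).mono hqS.le⟩
    ⟨.of_le (H.nonneg r) hr, H.left.noStrongEnvy r⟩
  refine ⟨Y, hY, .inl (utility_lt_utility H.nodup ?_ ?_ ?_)⟩
  exacts [hYp ▸ hp, hYq ▸ hqS.le, hYr ▸ le_rfl]

theorem improvable_of_mutual_envy (hpS : val (v p) S ≤ val (v p) (X p))
    (hpT : val (v p) (X p) < val (v p) T) (hqT : val (v q) T ≤ val (v q) (X q))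
    (hqS : val (v q) (X q) < val (v q) S) (a : Fin 3) : Improvable v X a := by
  have hsum : val (v r) (exchange g S T (X q)) + val (v r) (exchange g T S (X p)) ≤
      val (v r) (X r) + val (v r) (X r) := by
    linarith [H.val_exchange_add_val r, H.symm.val_exchange_add_val r, H.left.source r,
      H.right.source r]
  rcases le_total (val (v r) (exchange g T S (X p))) (val (v r) (X r)) with hr | hr
  · exact H.improvable_of_exchange hpS hpT hqT hqS hr a
  · exact H.symm.improvable_of_exchange hqT hqS hpS hpT (by linarith) a

theorem improvable_of_rotation (hp : val (v p) (X p) < val (v p) (X r))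
    (hpR : val (v p) (exchange g S T (X q)) ≤ val (v p) (X r))
    (hqT : val (v q) T ≤ val (v q) (X q)) (hqS : val (v q) (X q) < val (v q) S)
    (hrS : val (v r) S ≤ val (v r) (X r)) (hrT : val (v r) (X r) < val (v r) T) (a : Fin 3) :
    Improvable v X a := by
  have hq : val (v q) (X q) < val (v q) (exchange g S T (X q)) := by
    linarith [H.val_exchange_add_val q]
  have hr : val (v r) (exchange g S T (X q)) ≤ val (v r) T := by
    linarith [H.val_exchange_add_val r, H.right.source r]
  obtain ⟨Y, hY, hYp, hYq, hYr⟩ := exists_isEFXAllocation H.nonneg H.nodup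
    (by grind [H.pairwise_disjoint_exchange])
    ⟨.of_le (H.nonneg p) hpR, (H.right.noStrongEnvy p).mono hp.le⟩
    ⟨(H.alloc.noStrongEnvy r q).mono hq.le, (H.right.noStrongEnvy q).mono hq.le⟩
    ⟨(H.alloc.noStrongEnvy r r).mono hrT.le, .of_le (H.nonneg r) hr⟩
  refine ⟨Y, hY, .inl (utility_lt_utility H.nodup ?_ ?_ ?_)⟩
  exacts [hYp ▸ hp, hYq ▸ hq.le, hYr ▸ hrT.le]

theorem improvable_left (hp : val (v p) (X p) < val (v p) (X r))
    (hpT : val (v p) T ≤ val (v p) (X p))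
    (hpR : val (v p) (X r) ≤ val (v p) (exchange g S T (X q)))
    (hrS : val (v r) S ≤ val (v r) (X r)) (hrT : val (v r) (X r) < val (v r) T) :
    Improvable v X p := by
  have hrR : val (v r) (exchange g S T (X q)) ≤ val (v r) (X r) := by
    linarith [H.val_exchange_add_val r, H.right.source r]
  obtain ⟨Y, hY, hYp, -⟩ := exists_isEFXAllocation_of_two_acceptable H.nonneg H.nodup
    (by grind [H.pairwise_disjoint_exchange]) (max_le ((hpT.trans hp.le).trans hpR) hpR)
    (hrR.trans hrT.le) hrR ((H.alloc.noStrongEnvy r r).mono hrT.le) (H.right.noStrongEnvy r)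
  exact ⟨Y, hY, .inr (hp.trans_le (le_of_max_le_right hYp))⟩

theorem sdiff_left_nonempty (hpS : val (v p) S ≤ val (v p) (X p)) : (X p \ S).Nonempty := by
  refine sdiff_nonempty.2 fun hXS => ?_
  have hss : X p ⊂ S := hXS.ssubset_of_mem_notMem H.left.mem (H.notMem p)
  exact hpS.not_gt (val_strictMono (H.pos p) hss)

theorem val_lt_val_union_sdiff_left {i j : Fin 3} (hpj : p ≠ j)
    (hpS : val (v p) S ≤ val (v p) (X p)) :
    val (v i) (X j) < val (v i) (X j ∪ (X p \ S)) := by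
  have hdisj : Disjoint (X j) (X p \ S) := (H.alloc.disjoint hpj.symm).mono_right sdiff_subset
  have hempty := val_strictMono (H.pos i) (H.sdiff_left_nonempty hpS).empty_ssubset
  simpa [_root_.val, sum_union hdisj] using hempty

theorem improvable_right (hpS : val (v p) S ≤ val (v p) (X p))
    (hp : val (v p) (X p) < val (v p) (X r)) (hqr : val (v q) (X r) ≤ val (v q) (X q))
    (hqS : val (v q) (X q) < val (v q) S) (hrS : val (v r) S ≤ val (v r) (X r)) :
    Improvable v X q := by
  have hE : val (v q) (X q) < val (v q) (X q ∪ (X p \ S)) :=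
    H.val_lt_val_union_sdiff_left (by grind [H.nodup]) hpS
  have hdisj : [S, X q ∪ (X p \ S), X r].Pairwise Disjoint := by
    grind [H.pairwise_disjoint_trimmed, H.pairwise_disjoint, Finset.disjoint_left]
  obtain ⟨Y, hY, hYq⟩ := exists_isEFXAllocation_lt_of_reserve H.nonneg
    (p := p) (q := r) (r := q) (by grind [H.nodup]) hdisj (hpS.trans hp.le) hrS hqr hqS hE
    (H.left.noStrongEnvy q)
  exact ⟨Y, hY, .inr hYq⟩

theorem improvable_third (hpS : val (v p) S ≤ val (v p) (X p))
    (hpT : val (v p) T ≤ val (v p) (exchange g S T (X q)))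
    (hqT : val (v q) T ≤ val (v q) (X q)) (hqS : val (v q) (X q) < val (v q) S)
    (hrS : val (v r) S ≤ val (v r) (X r)) (hrT : val (v r) (X r) < val (v r) T) :
    Improvable v X r := by
  have hqR : val (v q) T ≤ val (v q) (exchange g S T (X q)) := by
    linarith [H.val_exchange_add_val q]
  have hrR : val (v r) (exchange g S T (X q)) ≤ val (v r) (X r) := by
    linarith [H.val_exchange_add_val r, H.right.source r]
  have hE : val (v r) (X r) < val (v r) (X r ∪ (X p \ S)) :=
    H.val_lt_val_union_sdiff_left (by grind [H.nodup]) hpS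
  have hdisj : [T, X r ∪ (X p \ S), exchange g S T (X q)].Pairwise Disjoint := by
    grind [H.pairwise_disjoint_exchange, H.symm.pairwise_disjoint_trimmed, H.pairwise_disjoint,
      exchange, Finset.disjoint_left]
  obtain ⟨Y, hY, hYr⟩ := exists_isEFXAllocation_lt_of_reserve H.nonneg H.nodup hdisj
    hpT hqR hrR hrT hE (H.right.noStrongEnvy r)
  exact ⟨Y, hY, .inr hYr⟩

theorem improvable (hp : val (v p) (X p) < val (v p) (X r))
    (hS : ∃ i, val (v i) (X i) < val (v i) S) (hT : ∃ i, val (v i) (X i) < val (v i) T)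
    (a : Fin 3) : Improvable v X a := by
  rcases lt_or_ge (val (v p) (X p)) (val (v p) S) with hpS | hpS
  · exact H.improvable_of_self_envy hpS a
  rcases lt_or_ge (val (v r) (X r)) (val (v r) S) with hrS | hrS
  · exact H.improvable_of_envy_cycle hp hrS a
  rcases lt_or_ge (val (v q) (X q)) (val (v q) T) with hqT | hqT
  · exact H.symm.improvable_of_self_envy hqT a
  have hqS : val (v q) (X q) < val (v q) S := by
    simpa [exists_agent_iff H.nodup, hpS.not_gt, hrS.not_gt] using hS
  rcases lt_or_ge (val (v p) (X p)) (val (v p) T) with hpT | hpT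
  · exact H.improvable_of_mutual_envy hpS hpT hqT hqS a
  have hrT : val (v r) (X r) < val (v r) T := by
    simpa [exists_agent_iff H.nodup, hpT.not_gt, hqT.not_gt] using hT
  rcases lt_or_ge (val (v q) (X q)) (val (v q) (X r)) with hq | hq
  · exact H.symm.improvable_of_envy_cycle hq hrT a
  rcases le_total (val (v p) (exchange g S T (X q))) (val (v p) (X r)) with hpR | hpR
  · exact H.improvable_of_rotation hp hpR hqT hqS hrS hrT a
  rcases eq_or_eq_or_eq_of_nodup H.nodup a with rfl | rfl | rfl
  · exact H.improvable_left hp hpT hpR hrS hrT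
  · exact H.improvable_right hpS hp hq hqS hrS
  · exact H.improvable_third hpS ((hpT.trans hp.le).trans hpR) hqT hqS hrS hrT

end SourcePair

theorem exists_nodup_of_ne {p q : Fin 3} (hpq : p ≠ q) : ∃ r, [p, q, r].Nodup := by
  decide +revert

theorem improvable_of_two_sources (hv : ∀ i h, 0 < v i h) (hX : IsEFXAllocation_s14 v X)
    (hg : ∀ i, g ∉ X i) {s₁ s₂ : Fin 3} (hs : s₁ ≠ s₂)
    (hs₁ : ∀ i, val (v i) (X s₁) ≤ val (v i) (X i))
    (hs₂ : ∀ i, val (v i) (X s₂) ≤ val (v i) (X i))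
    (honly : ∀ j, (∀ i, val (v i) (X j) ≤ val (v i) (X i)) → j = s₁ ∨ j = s₂) (a : Fin 3) :
    Improvable v X a := by
  obtain ⟨r, hr⟩ := exists_nodup_of_ne hs
  obtain ⟨S, hS, hSenvy⟩ := exists_trimmedSource hv (hg s₁) hs₁
  obtain ⟨T, hT, hTenvy⟩ := exists_trimmedSource hv (hg s₂) hs₂
  have H : SourcePair v X s₁ s₂ r g S T := ⟨hv, hr, hX, hg, hS, hT⟩
  have henvied : ∃ i, val (v i) (X i) < val (v i) (X r) := by
    by_contra! hsource
    grind [honly r hsource]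
  simp only [exists_agent_iff hr, lt_irrefl, or_false] at henvied
  rcases henvied with h₁ | h₂
  · exact H.improvable h₁ hSenvy hTenvy a
  · exact H.symm.improvable h₂ hTenvy hSenvy a

end Improvement

theorem exists_subset_lt_or_lt_of_two_sources {G : Type*} [DecidableEq G] {v : Fin 3 → G → ℝ}
    {X : Fin 3 → Finset G} {g : G} {U : Finset G} (hv : ∀ i, ∀ h ∈ U, 0 < v i h)
    (hX : IsEFXAllocation_s14 v X) (hXU : ∀ i, X i ⊆ U) (hgU : g ∈ U) (hg : ∀ i, g ∉ X i)
    {s₁ s₂ : Fin 3} (hs : s₁ ≠ s₂) (hs₁ : ∀ i, val (v i) (X s₁) ≤ val (v i) (X i))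
    (hs₂ : ∀ i, val (v i) (X s₂) ≤ val (v i) (X i))
    (honly : ∀ j, (∀ i, val (v i) (X j) ≤ val (v i) (X i)) → j = s₁ ∨ j = s₂) (a : Fin 3) :
    ∃ Y, IsEFXAllocation_s14 v Y ∧ (∀ i, Y i ⊆ U) ∧
      (utility v X < utility v Y ∨ utility v X a < utility v Y a) := by
  let e : U ↪ G := .subtype (· ∈ U)
  obtain ⟨X, rfl⟩ : ∃ X' : Fin 3 → Finset U, X = fun i => (X' i).map e :=
    ⟨fun i => (X i).subtype (· ∈ U), funext fun i => (subtype_map_of_mem (hXU i)).symm⟩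
  lift g to U using hgU
  simp only [val_map] at hs₁ hs₂ honly
  obtain ⟨Y, hY, hlt⟩ := improvable_of_two_sources (g := g) (fun i h => hv i h h.2)
    ((isEFXAllocation_map_iff e).1 hX) (fun i hgX => hg i (mem_map_of_mem e hgX)) hs hs₁ hs₂
    honly a
  refine ⟨fun i => (Y i).map e, (isEFXAllocation_map_iff e).2 hY,
    fun i => map_subtype_subset (Y i), ?_⟩
  rwa [utility_map, utility_map]

theorem two_sources_lex_dominating_efx_general {G : Type*} [DecidableEq G] (M : Finset G)
    (v : Fin 3 → G → ℝ) (hv : ∀ i : Fin 3, ∀ g ∈ M, 0 < v i g)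
    (X : Fin 3 → Finset G) (hXM : ∀ i, X i ⊆ M)
    (hdisj : ∀ i j, i ≠ j → Disjoint (X i) (X j))
    (hEFX : EFX v X)
    (g : G) (hg : g ∈ M) (hun : g ∉ X 0 ∪ X 1 ∪ X 2)
    (s₁ s₂ : Fin 3) (hs12 : s₁ ≠ s₂)
    (hsrc₁ : ∀ i : Fin 3, ¬ val (v i) (X i) < val (v i) (X s₁))
    (hsrc₂ : ∀ i : Fin 3, ¬ val (v i) (X i) < val (v i) (X s₂))
    (honly : ∀ j : Fin 3,
      (∀ i : Fin 3, ¬ val (v i) (X i) < val (v i) (X j)) → j = s₁ ∨ j = s₂) :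
    ∀ a b c : Fin 3, a ≠ b → a ≠ c → b ≠ c →
      ∃ Y : Fin 3 → Finset G,
        (∀ i, Y i ⊆ M) ∧
        (∀ i j, i ≠ j → Disjoint (Y i) (Y j)) ∧
        Y 0 ∪ Y 1 ∪ Y 2 ⊆ X 0 ∪ X 1 ∪ X 2 ∪ {g} ∧
        EFX v Y ∧
        (val (v a) (X a) < val (v a) (Y a) ∨
          (val (v a) (Y a) = val (v a) (X a) ∧
            (val (v b) (X b) < val (v b) (Y b) ∨
              (val (v b) (Y b) = val (v b) (X b) ∧
                val (v c) (X c) < val (v c) (Y c))))) := by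
  intro a b c hab hac hbc
  have hX : ∀ i, X i ⊆ X 0 ∪ X 1 ∪ X 2 ∪ {g} := by
    simp only [Fin.forall_fin_succ]
    grind
  have hM : X 0 ∪ X 1 ∪ X 2 ∪ {g} ⊆ M := by grind
  have hgX : ∀ i, g ∉ X i := by
    simp only [Fin.forall_fin_succ]
    grind
  simp only [not_lt] at hsrc₁ hsrc₂ honly
  obtain ⟨Y, hY, hYX, hlt⟩ := exists_subset_lt_or_lt_of_two_sources
    (fun i h hh => hv i h (hM hh)) ⟨hdisj, hEFX⟩ hX (by simp) hgX hs12 hsrc₁ hsrc₂ honly a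
  exact ⟨Y, fun i => (hYX i).trans hM, hY.disjoint,
    union_subset (union_subset (hYX 0) (hYX 1)) (hYX 2), hY.efx,
    lex_of_lt_or_lt (by grind) hlt⟩

/-- Lemma 10 (two sources): in a non-degenerate instance with a partial EFX allocation `X`,
an unallocated good `g`, and an acyclic envy graph with exactly two sources, for every
ordering `(a,b,c)` of the agents there is a partial EFX allocation `Y` (over the goods of
`X` plus `g`) whose valuation triple is lexicographically strictly greater. -/
theorem two_sources_lex_dominating_efx {G : Type*} [DecidableEq G] (M : Finset G)
    (v : Fin 3 → G → ℝ) (hv : ∀ i : Fin 3, ∀ g ∈ M, 0 ≤ v i g)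
    (hnd : ∀ i : Fin 3, ∀ S ⊆ M, ∀ T ⊆ M, S ≠ T → val (v i) S ≠ val (v i) T)
    (X : Fin 3 → Finset G) (hXM : ∀ i, X i ⊆ M)
    (hdisj : ∀ i j, i ≠ j → Disjoint (X i) (X j))
    (hEFX : EFX v X)
    (g : G) (hg : g ∈ M) (hun : g ∉ X 0 ∪ X 1 ∪ X 2)
    (hacyc : ∀ i : Fin 3, ¬ Relation.TransGen
      (fun a b => val (v a) (X a) < val (v a) (X b)) i i)
    (s₁ s₂ : Fin 3) (hs12 : s₁ ≠ s₂)
    (hsrc₁ : ∀ i : Fin 3, ¬ val (v i) (X i) < val (v i) (X s₁))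
    (hsrc₂ : ∀ i : Fin 3, ¬ val (v i) (X i) < val (v i) (X s₂))
    (honly : ∀ j : Fin 3,
      (∀ i : Fin 3, ¬ val (v i) (X i) < val (v i) (X j)) → j = s₁ ∨ j = s₂) :
    ∀ a b c : Fin 3, a ≠ b → a ≠ c → b ≠ c →
      ∃ Y : Fin 3 → Finset G,
        (∀ i, Y i ⊆ M) ∧
        (∀ i j, i ≠ j → Disjoint (Y i) (Y j)) ∧
        Y 0 ∪ Y 1 ∪ Y 2 ⊆ X 0 ∪ X 1 ∪ X 2 ∪ {g} ∧
        EFX v Y ∧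
        (val (v a) (X a) < val (v a) (Y a) ∨
          (val (v a) (Y a) = val (v a) (X a) ∧
            (val (v b) (X b) < val (v b) (Y b) ∨
              (val (v b) (Y b) = val (v b) (X b) ∧
                val (v c) (X c) < val (v c) (Y c))))) :=
  two_sources_lex_dominating_efx_general M v (fun i => pos_of_val_injOn (hv i) (hnd i)) X hXM hdisj
    hEFX g hg hun s₁ s₂ hs12 hsrc₁ hsrc₂ honly
end
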